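/- arXiv:1210.7708 — 3 statements merged into one kernel-verified Lean document; each statement's English description precedes it below -/
import Mathlib

section
/- (Comparison lemma) Let n ≥ 2, 1 ≤ k ≤ n-1, σ ≥ 0 and x₀ ∈ [-1,1]. Let p be a real polynomial of degree at most n such that: (1) p^{(k+1)}(x₀) = 0; (2) p has an n-alternance on [-1,1], i.e. there exist points -1 ≤ τ₁ < τ₂ < ⋯ < τ_n ≤ 1 with (−1)^{n−i}·p(τ_i) = 1 = sup_{x∈[-1,1]}|p(x)| for i = 1,…,n; (3) sup_{x∈[-1,1]}|p^{(n)}(x)| ≥ σ. Then every function f : ℝ → ℝ that is n times differentiable on [-1,1] and satisfies f^{(k+1)}(x₀) = 0, |f(x)| ≤ 1 on [-1,1], and |f^{(n)}(x)| ≤ σ on [-1,1], obeys |f^{(k)}(x₀)| ≤ |p^{(k)}(x₀)|. -/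
open Polynomial Set

/-- `k`-th derivative of the Chebyshev polynomial `T_m`, evaluated at `x`. -/
noncomputable def chebDeriv (m : ℤ) (k : ℕ) (x : ℝ) : ℝ :=
  (derivative^[k] (Polynomial.Chebyshev.T ℝ m)).eval x

/-- `σ_n = 2^(n-1) n! = T_n^{(n)}(1)`. -/
noncomputable def sigmaN (n : ℕ) : ℝ := 2 ^ (n - 1) * (n.factorial : ℝ)

/-- `f` is `n` times differentiable on the set `s`. -/
def NTimesDiffOn (n : ℕ) (f : ℝ → ℝ) (s : Set ℝ) : Prop :=
  ∀ i < n, DifferentiableOn ℝ (iteratedDerivWithin i f s) s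

/-- The class `W^n_∞(σ)` on `[-1,1]`. -/
def memW (n : ℕ) (σ : ℝ) (f : ℝ → ℝ) : Prop :=
  NTimesDiffOn n f (Icc (-1:ℝ) 1) ∧
  (∀ x ∈ Icc (-1:ℝ) 1, |f x| ≤ 1) ∧
  (∀ x ∈ Icc (-1:ℝ) 1, |iteratedDerivWithin n f (Icc (-1:ℝ) 1) x| ≤ σ)

/-- `m_k(x,σ) = sup { |f^{(k)}(x)| : f ∈ W^n_∞(σ) }`. -/
noncomputable def mval (n k : ℕ) (x σ : ℝ) : ℝ :=
  sSup {y | ∃ f : ℝ → ℝ, memW n σ f ∧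
    y = |iteratedDerivWithin k f (Icc (-1:ℝ) 1) x|}

/-- `m_k^*(x,σ) = sup { |f^{(k)}(x)| : f ∈ W^n_∞(σ), f^{(k+1)}(x) = 0 }`. -/
noncomputable def mstar (n k : ℕ) (x σ : ℝ) : ℝ :=
  sSup {y | ∃ f : ℝ → ℝ, memW n σ f ∧
    iteratedDerivWithin (k+1) f (Icc (-1:ℝ) 1) x = 0 ∧
    y = |iteratedDerivWithin k f (Icc (-1:ℝ) 1) x|}

/-- `μ_k(x₀)`: best constant in the pointwise Markov inequality. -/
noncomputable def muk (n k : ℕ) (x : ℝ) : ℝ :=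
  sSup {y | ∃ p : Polynomial ℝ, p.natDegree ≤ n ∧
    (∀ t ∈ Icc (-1:ℝ) 1, |p.eval t| ≤ 1) ∧
    y = |(derivative^[k] p).eval x|}

/-- `μ_k^*(x₀)`: best constant in the pointwise Schur-type inequality. -/
noncomputable def mukStar (n k : ℕ) (x : ℝ) : ℝ :=
  sSup {y | ∃ p : Polynomial ℝ, p.natDegree ≤ n ∧
    (∀ t ∈ Icc (-1:ℝ) 1, |p.eval t| ≤ 1) ∧
    (derivative^[k+1] p).eval x = 0 ∧
    y = |(derivative^[k] p).eval x|}

/-!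
Suppose `|p^(k)(x₀)| < |f^(k)(x₀)|` and pick `γ` with `|γ| < 1` and `p^(k)(x₀) = γ f^(k)(x₀)`. The
difference `g = p - γ f` inherits the alternating signs of `p` at the `n` nodes, so `g` changes sign
`n - 1` times, and by Rolle `g^(k)` changes sign `n - 1 - k` times. Moreover `g^(k)` and `g^(k+1)`
both vanish at `x₀`. Because of this double zero, passing from `g^(k)` to `g^(k+2)` loses no sign
change, so `g^(n)` changes sign at least once (if `k ≤ n - 2`). But `p^(n)` is a constant which
dominates `γ f^(n)`, so `g^(n)` cannot change sign. If `k = n - 1` this constant is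
`p^(k+1)(x₀) = 0`, hence `g^(k)` is constant, equal to its value `0` at `x₀`, yet it is nonzero
somewhere.
-/

section SignArithmetic

variable {R : Type*} [CommRing R] [LinearOrder R] [IsStrictOrderedRing R] {a b c d : R}

lemma mul_neg_of_mul_pos_of_mul_neg (hab : 0 < a * b) (hcd : 0 < c * d) (hac : a * c < 0) :
    b * d < 0 :=
  (neg_iff_neg_of_mul_pos (mul_mul_mul_comm a b c d ▸ mul_pos hab hcd)).1 hac

lemma mul_sub_pos_of_abs_lt_abs (hca : 0 < c * a) (hba : |b| < |a|) : 0 < c * (a - b) := by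
  rcases pos_and_pos_or_neg_and_neg_of_mul_pos hca with ⟨hc, ha⟩ | ⟨hc, ha⟩
  · rw [abs_of_pos ha] at hba
    exact mul_pos hc (sub_pos.2 (lt_of_abs_lt hba))
  · rw [abs_of_neg ha] at hba
    exact mul_pos_of_neg_of_neg hc (by linarith [neg_lt_of_abs_lt hba])

lemma mul_sub_mul_sub_nonneg_of_abs_le_abs (ha : |a| ≤ |c|) (hb : |b| ≤ |c|) :
    0 ≤ (c - a) * (c - b) := by
  rcases le_total 0 c with hc | hc
  · rw [abs_of_nonneg hc] at ha hb
    exact mul_nonneg (sub_nonneg.2 (le_of_abs_le ha)) (sub_nonneg.2 (le_of_abs_le hb))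
  · rw [abs_of_nonpos hc] at ha hb
    exact mul_nonneg_of_nonpos_of_nonpos (by linarith [neg_le_of_abs_le ha])
      (by linarith [neg_le_of_abs_le hb])

lemma exists_abs_lt_one_eq_mul {K : Type*} [Field K] [LinearOrder K] [IsStrictOrderedRing K]
    {a b : K} (hab : |a| < |b|) : ∃ γ : K, |γ| < 1 ∧ a = γ * b := by
  have hb := (abs_nonneg a).trans_lt hab
  exact ⟨a / b, by rwa [abs_div, div_lt_one hb], (div_mul_cancel₀ a (abs_pos.1 hb)).symm⟩

end SignArithmetic

lemma exists_mul_hasDerivWithinAt_pos {u u' : ℝ → ℝ} {s : Set ℝ} [s.OrdConnected]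
    (hu : ∀ x ∈ s, HasDerivWithinAt u (u' x) s x) {a b ε : ℝ} (ha : a ∈ s) (hb : b ∈ s)
    (hab : a < b) (hε : 0 < ε * (u b - u a)) :
    ∃ c ∈ Ioo a b, c ∈ s ∧ 0 < ε * u' c := by
  have hsub : Icc a b ⊆ s := OrdConnected.out ‹_› ha hb
  obtain ⟨c, hc, hslope⟩ := exists_hasDerivAt_eq_slope u u' hab
    (fun x hx ↦ (hu x (hsub hx)).continuousWithinAt.mono hsub)
    (fun x hx ↦ ((hu x (hsub (Ioo_subset_Icc_self hx))).mono hsub).hasDerivAt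
      (Icc_mem_nhds hx.1 hx.2))
  refine ⟨c, hc, hsub (Ioo_subset_Icc_self hc), ?_⟩
  rw [hslope, ← mul_div_assoc]
  exact div_pos hε (sub_pos.2 hab)

/-- `u` has at least `m` sign changes on `s`, witnessed by `m + 1` increasing points of `s` where
its values are nonzero with alternating signs. Nonvanishing is asked for separately because of the
case `m = 0`. -/
def HasSignChanges (u : ℝ → ℝ) (s : Set ℝ) (m : ℕ) : Prop :=
  ∃ t : Fin (m + 1) → ℝ, StrictMono t ∧ (∀ i, t i ∈ s) ∧ (∀ i, u (t i) ≠ 0) ∧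
    ∀ i : Fin m, u (t i.castSucc) * u (t i.succ) < 0

/-- The points `t` of `s` witness sign changes of `u` on either side of `x₀`: the values of `u` at
consecutive points have opposite signs, except possibly for the two points enclosing `x₀`. -/
structure AlternatesBeside (u : ℝ → ℝ) (s : Set ℝ) (x₀ : ℝ) {m : ℕ} (t : Fin (m + 1) → ℝ) :
    Prop where
  strictMono : StrictMono t
  mem : ∀ i, t i ∈ s
  ne_zero : ∀ i, u (t i) ≠ 0
  mul_neg : ∀ i : Fin m, 0 < (t i.castSucc - x₀) * (t i.succ - x₀) →
    u (t i.castSucc) * u (t i.succ) < 0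

section Rolle

variable {u u' u'' : ℝ → ℝ} {s : Set ℝ} {x₀ : ℝ} {m : ℕ}

lemma HasSignChanges.of_alternance {t : Fin (m + 1) → ℝ} (ht : StrictMono t)
    (hts : ∀ i, t i ∈ s) (h : ∀ i : Fin (m + 1), 0 < (-1 : ℝ) ^ (m - (i : ℕ)) * u (t i)) :
    HasSignChanges u s m := by
  refine ⟨t, ht, hts, fun i ↦ right_ne_zero_of_mul (h i).ne', fun i ↦ ?_⟩
  have hodd : (-1 : ℝ) ^ (m - (i.castSucc : ℕ)) * (-1) ^ (m - (i.succ : ℕ)) < 0 := by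
    rw [← pow_add, Odd.neg_one_pow ⟨m - (i.succ : ℕ),
      by simp only [Fin.val_castSucc, Fin.val_succ]; omega⟩]
    exact neg_one_lt_zero
  exact mul_neg_of_mul_pos_of_mul_neg (h i.castSucc) (h i.succ) hodd

lemma HasSignChanges.sub_const_mul_of_alternance {v : ℝ → ℝ} {γ : ℝ} {t : Fin (m + 1) → ℝ}
    (ht : StrictMono t) (hts : ∀ i, t i ∈ s)
    (hu : ∀ i : Fin (m + 1), 0 < (-1 : ℝ) ^ (m - (i : ℕ)) * u (t i))
    (hv : ∀ i, |v (t i)| ≤ |u (t i)|) (hγ : |γ| < 1) :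
    HasSignChanges (fun x ↦ u x - γ * v x) s m := by
  refine .of_alternance ht hts fun i ↦ mul_sub_pos_of_abs_lt_abs (hu i) ?_
  calc |γ * v (t i)| = |γ| * |v (t i)| := abs_mul _ _
    _ ≤ |γ| * |u (t i)| := mul_le_mul_of_nonneg_left (hv i) (abs_nonneg γ)
    _ < |u (t i)| := mul_lt_of_lt_one_left (abs_pos.2 (right_ne_zero_of_mul (hu i).ne')) hγ

lemma HasSignChanges.exists_mul_neg (h : HasSignChanges u s 1) :
    ∃ x ∈ s, ∃ y ∈ s, u x * u y < 0 :=
  let ⟨t, _, hts, _, hneg⟩ := h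
  ⟨t 0, hts 0, t 1, hts 1, hneg 0⟩

lemma HasSignChanges.deriv [s.OrdConnected] (hu : ∀ x ∈ s, HasDerivWithinAt u (u' x) s x)
    (h : HasSignChanges u s (m + 1)) : HasSignChanges u' s m := by
  obtain ⟨t, ht, hts, -, hneg⟩ := h
  have hw (i : Fin (m + 1)) : ∃ c ∈ Ioo (t i.castSucc) (t i.succ), c ∈ s ∧
      0 < u (t i.succ) * u' c :=
    exists_mul_hasDerivWithinAt_pos hu (hts _) (hts _) (ht i.castSucc_lt_succ)
      (by nlinarith [hneg i, sq_nonneg (u (t i.succ))])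
  choose w hwI hws hsign using hw
  refine ⟨w, fun i j hij ↦ ?_, hws, fun i ↦ right_ne_zero_of_mul (hsign i).ne', fun i ↦ ?_⟩
  · calc w i < t i.succ := (hwI i).2
      _ ≤ t j.castSucc := ht.monotone (Fin.succ_le_castSucc_iff.2 hij)
      _ < w j := (hwI j).1
  · exact mul_neg_of_mul_pos_of_mul_neg (hsign i.castSucc) (hsign i.succ) (hneg i.succ)

lemma exists_mul_deriv_neg_of_lt_zero_point [s.OrdConnected]
    (hu : ∀ x ∈ s, HasDerivWithinAt u (u' x) s x) (hx₀ : x₀ ∈ s) (h0 : u x₀ = 0) {a b : ℝ}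
    (ha : a ∈ s) (hb : b ∈ s) (hua : u a ≠ 0) (hax : a < x₀) (hab : a < b)
    (hneg : b < x₀ → u a * u b < 0) :
    ∃ c ∈ Ioo a (min b x₀), c ∈ s ∧ u a * u' c < 0 := by
  have hmin : u a * u (min b x₀) ≤ 0 := by
    rcases lt_or_ge b x₀ with hb | hb
    · rw [min_eq_left hb.le]; exact (hneg hb).le
    · rw [min_eq_right hb, h0, mul_zero]
  obtain ⟨c, hc, hcs, hpos⟩ := exists_mul_hasDerivWithinAt_pos (ε := -u a) hu ha
    (min_rec' (· ∈ s) hb hx₀) (lt_min hab hax) (by nlinarith [sq_pos_of_ne_zero hua])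
  exact ⟨c, hc, hcs, by linarith⟩

lemma exists_mul_deriv_pos_of_zero_point_lt [s.OrdConnected]
    (hu : ∀ x ∈ s, HasDerivWithinAt u (u' x) s x) (hx₀ : x₀ ∈ s) (h0 : u x₀ = 0) {a b : ℝ}
    (ha : a ∈ s) (hb : b ∈ s) (hua : u a ≠ 0) (hxa : x₀ < a) (hba : b < a)
    (hneg : x₀ < b → u b * u a < 0) :
    ∃ c ∈ Ioo (max b x₀) a, c ∈ s ∧ 0 < u a * u' c := by
  have hmax : u (max b x₀) * u a ≤ 0 := by
    rcases lt_or_ge x₀ b with hb | hb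
    · rw [max_eq_left hb.le]; exact (hneg hb).le
    · rw [max_eq_right hb, h0, zero_mul]
  exact exists_mul_hasDerivWithinAt_pos hu (max_rec' (· ∈ s) hb hx₀) ha (max_lt hba hxa)
    (by nlinarith [sq_pos_of_ne_zero hua])

lemma AlternatesBeside.exists_deriv_of_lt [s.OrdConnected] {t : Fin (m + 1) → ℝ}
    (h : AlternatesBeside u s x₀ t) (hu : ∀ x ∈ s, HasDerivWithinAt u (u' x) s x) (hx₀ : x₀ ∈ s)
    (h0 : u x₀ = 0) {i : Fin (m + 1)} (hi : t i < x₀) :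
    ∃ c ∈ Ioo (t i) x₀, c ∈ s ∧ (∀ j > i, c < t j) ∧ u (t i) * u' c < 0 := by
  have exists_lt_min {b : ℝ} := exists_mul_deriv_neg_of_lt_zero_point (b := b) hu hx₀ h0
    (h.mem i) (hua := h.ne_zero i) (hax := hi)
  cases i using Fin.lastCases with
  | last =>
    obtain ⟨c, hc, hcs, hneg⟩ := exists_lt_min hx₀ hi (fun hlt ↦ (lt_irrefl _ hlt).elim)
    rw [min_self] at hc
    exact ⟨c, hc, hcs, fun j hj ↦ (j.le_last.not_gt hj).elim, hneg⟩
  | cast i =>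
    obtain ⟨c, ⟨hic, hc⟩, hcs, hneg⟩ := exists_lt_min (h.mem i.succ)
      (h.strictMono i.castSucc_lt_succ)
      (fun hlt ↦ h.mul_neg i (mul_pos_of_neg_of_neg (sub_neg.2 hi) (sub_neg.2 hlt)))
    obtain ⟨hcsucc, hcx₀⟩ := lt_min_iff.1 hc
    exact ⟨c, ⟨hic, hcx₀⟩, hcs, fun j hj ↦
      hcsucc.trans_le (h.strictMono.monotone (Fin.castSucc_lt_iff_succ_le.1 hj)), hneg⟩

lemma AlternatesBeside.exists_deriv_of_gt [s.OrdConnected] {t : Fin (m + 1) → ℝ}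
    (h : AlternatesBeside u s x₀ t) (hu : ∀ x ∈ s, HasDerivWithinAt u (u' x) s x) (hx₀ : x₀ ∈ s)
    (h0 : u x₀ = 0) {i : Fin (m + 1)} (hi : x₀ < t i) :
    ∃ c ∈ Ioo x₀ (t i), c ∈ s ∧ (∀ j < i, t j < c) ∧ 0 < u (t i) * u' c := by
  have exists_max_lt {b : ℝ} := exists_mul_deriv_pos_of_zero_point_lt (b := b) hu hx₀ h0
    (h.mem i) (hua := h.ne_zero i) (hxa := hi)
  cases i using Fin.cases with
  | zero =>
    obtain ⟨c, hc, hcs, hpos⟩ := exists_max_lt hx₀ hi (fun hlt ↦ (lt_irrefl _ hlt).elim)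
    rw [max_self] at hc
    exact ⟨c, hc, hcs, fun j hj ↦ (j.zero_le.not_gt hj).elim, hpos⟩
  | succ i =>
    obtain ⟨c, ⟨hc, hci⟩, hcs, hpos⟩ := exists_max_lt (h.mem i.castSucc)
      (h.strictMono i.castSucc_lt_succ)
      (fun hlt ↦ h.mul_neg i (mul_pos (sub_pos.2 hlt) (sub_pos.2 hi)))
    obtain ⟨hcast, hx₀c⟩ := max_lt_iff.1 hc
    exact ⟨c, ⟨hx₀c, hci⟩, hcs, fun j hj ↦
      (h.strictMono.monotone (Fin.le_castSucc_iff.2 hj)).trans_lt hcast, hpos⟩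

-- `w i` is a mean value point between `t i` and its neighbour towards `x₀`, where both the other
-- points `t j` and `x₀` itself (at which `u` vanishes) count as neighbours.
lemma AlternatesBeside.exists_deriv [s.OrdConnected] {t : Fin (m + 1) → ℝ}
    (h : AlternatesBeside u s x₀ t) (hu : ∀ x ∈ s, HasDerivWithinAt u (u' x) s x) (hx₀ : x₀ ∈ s)
    (h0 : u x₀ = 0) :
    ∃ w : Fin (m + 1) → ℝ, AlternatesBeside u' s x₀ w ∧ (∀ i, 0 < (t i - x₀) * (w i - x₀)) ∧
      ∀ i, 0 < u (t i) * (t i - x₀) * u' (w i) := by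
  have hne (i) : t i < x₀ ∨ x₀ < t i := lt_or_gt_of_ne fun hi ↦ h.ne_zero i (hi ▸ h0)
  have hw (i) : ∃ c ∈ s, 0 < (t i - x₀) * (c - x₀) ∧ 0 < u (t i) * (t i - x₀) * u' c ∧
      (t i < x₀ → c ∈ Ioo (t i) x₀ ∧ ∀ j > i, c < t j) ∧
      (x₀ < t i → c ∈ Ioo x₀ (t i) ∧ ∀ j < i, t j < c) := by
    rcases hne i with hi | hi
    · obtain ⟨c, hc, hcs, hcj, hneg⟩ := h.exists_deriv_of_lt hu hx₀ h0 hi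
      exact ⟨c, hcs, mul_pos_of_neg_of_neg (sub_neg.2 hi) (sub_neg.2 hc.2),
        mul_right_comm (u (t i)) _ _ ▸ mul_pos_of_neg_of_neg hneg (sub_neg.2 hi),
        fun _ ↦ ⟨hc, hcj⟩, fun hi' ↦ (hi.not_gt hi').elim⟩
    · obtain ⟨c, hc, hcs, hjc, hpos⟩ := h.exists_deriv_of_gt hu hx₀ h0 hi
      exact ⟨c, hcs, mul_pos (sub_pos.2 hi) (sub_pos.2 hc.1),
        mul_right_comm (u (t i)) _ _ ▸ mul_pos hpos (sub_pos.2 hi),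
        fun hi' ↦ (hi.not_gt hi').elim, fun _ ↦ ⟨hc, hjc⟩⟩
  choose w hws hside hsign hleft hright using hw
  refine ⟨w, ⟨fun i j hij ↦ ?_, hws, fun i ↦ right_ne_zero_of_mul (hsign i).ne',
    fun i hww ↦ ?_⟩, hside, hsign⟩
  · rcases hne i with hi | hi <;> rcases hne j with hj | hj
    · exact ((hleft i hi).2 j hij).trans (hleft j hj).1.1
    · exact (hleft i hi).1.2.trans (hright j hj).1.1
    · exact (hi.not_gt ((h.strictMono hij).trans hj)).elim
    · exact (hright i hi).1.2.trans ((hright j hj).2 i hij)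
  · have htt : 0 < (t i.castSucc - x₀) * (t i.succ - x₀) := by
      refine pos_of_mul_pos_left ?_ hww.le
      rw [mul_mul_mul_comm]
      exact mul_pos (hside _) (hside _)
    refine mul_neg_of_mul_pos_of_mul_neg (hsign i.castSucc) (hsign i.succ) ?_
    rw [mul_mul_mul_comm]
    exact mul_neg_of_neg_of_pos (h.mul_neg i htt) htt

lemma HasSignChanges.of_double_zero [s.OrdConnected]
    (hu : ∀ x ∈ s, HasDerivWithinAt u (u' x) s x) (hu' : ∀ x ∈ s, HasDerivWithinAt u' (u'' x) s x)
    (hx₀ : x₀ ∈ s) (h0 : u x₀ = 0) (h0' : u' x₀ = 0) (h : HasSignChanges u s m) :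
    HasSignChanges u'' s m := by
  obtain ⟨t, ht, hts, hne, hneg⟩ := h
  have hbeside : AlternatesBeside u s x₀ t := ⟨ht, hts, hne, fun i _ ↦ hneg i⟩
  obtain ⟨w, hw, htw, huw⟩ := hbeside.exists_deriv hu hx₀ h0
  obtain ⟨v, hv, -, huv⟩ := hw.exists_deriv hu' hx₀ h0'
  have hsign (i) : 0 < u (t i) * u'' (v i) := by
    refine pos_of_mul_pos_left (b := (t i - x₀) * (w i - x₀) * u' (w i) ^ 2) ?_
      (mul_nonneg (htw i).le (sq_nonneg _))
    linarith [mul_pos (huw i) (huv i)]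
  exact ⟨v, hv.strictMono, hv.mem, hv.ne_zero, fun i ↦
    mul_neg_of_mul_pos_of_mul_neg (hsign i.castSucc) (hsign i.succ) (hneg i)⟩

end Rolle

/-- `G 0, …, G n` are successive derivatives within `s`, that is, `G j` is a `j`-th derivative of
`G 0`. -/
def HasDerivSeqOn (n : ℕ) (G : ℕ → ℝ → ℝ) (s : Set ℝ) : Prop :=
  ∀ j < n, ∀ x ∈ s, HasDerivWithinAt (G j) (G (j + 1) x) s x

section HasDerivSeqOn

variable {n k : ℕ} {G H : ℕ → ℝ → ℝ} {s : Set ℝ}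

lemma NTimesDiffOn.hasDerivSeqOn {f : ℝ → ℝ} (hf : NTimesDiffOn n f s) :
    HasDerivSeqOn n (fun j ↦ iteratedDerivWithin j f s) s := fun j hj x hx ↦ by
  simpa only [iteratedDerivWithin_succ] using (hf j hj x hx).hasDerivWithinAt

lemma hasDerivSeqOn_iterate_derivative (n : ℕ) (p : ℝ[X]) (s : Set ℝ) :
    HasDerivSeqOn n (fun j x ↦ (derivative^[j] p).eval x) s := fun j _ x _ ↦ by
  simpa only [Function.iterate_succ_apply'] using (derivative^[j] p).hasDerivWithinAt x s

lemma HasDerivSeqOn.sub_const_mul (hG : HasDerivSeqOn n G s) (hH : HasDerivSeqOn n H s) (γ : ℝ) :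
    HasDerivSeqOn n (fun j x ↦ G j x - γ * H j x) s :=
  fun j hj x hx ↦ (hG j hj x hx).sub ((hH j hj x hx).const_mul γ)

lemma HasDerivSeqOn.mono {m : ℕ} (hG : HasDerivSeqOn n G s) (hmn : m ≤ n) : HasDerivSeqOn m G s :=
  fun j hj ↦ hG j (hj.trans_le hmn)

lemma HasDerivSeqOn.hasSignChanges_add [s.OrdConnected] {a d m : ℕ}
    (hG : HasDerivSeqOn (a + d) G s) (h : HasSignChanges (G a) s (m + d)) :
    HasSignChanges (G (a + d)) s m := by
  induction d generalizing m with
  | zero => exact h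
  | succ d ih =>
    have h' : HasSignChanges (G a) s (m + 1 + d) := by rwa [add_right_comm]
    exact (ih (hG.mono (by omega)) h').deriv (hG (a + d) (by omega))

lemma HasDerivSeqOn.hasSignChanges_of_double_zero [s.OrdConnected] {d m : ℕ} {x₀ : ℝ}
    (hG : HasDerivSeqOn (k + 2 + d) G s) (hx₀ : x₀ ∈ s) (hk : G k x₀ = 0)
    (hk' : G (k + 1) x₀ = 0) (h : HasSignChanges (G 0) s (m + d + k)) :
    HasSignChanges (G (k + 2 + d)) s m := by
  have hGk : HasSignChanges (G k) s (m + d) := by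
    simpa only [zero_add] using (hG.mono (by omega : 0 + k ≤ _)).hasSignChanges_add h
  exact hG.hasSignChanges_add
    (hGk.of_double_zero (hG k (by omega)) (hG (k + 1) (by omega)) hx₀ hk hk')

lemma HasDerivSeqOn.not_hasSignChanges_of_deriv_eq_zero [s.OrdConnected] {x₀ : ℝ}
    (hG : HasDerivSeqOn (k + 1) G s) (hx₀ : x₀ ∈ s) (hk : G k x₀ = 0)
    (hG0 : ∀ x ∈ s, G (k + 1) x = 0) : ¬ HasSignChanges (G 0) s k := by
  intro h
  obtain ⟨t, -, hts, hne, -⟩ : HasSignChanges (G k) s 0 := by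
    rw [← zero_add k] at h
    simpa only [zero_add] using (hG.mono (by omega : 0 + k ≤ _)).hasSignChanges_add h
  have hconst := Convex.norm_image_sub_le_of_norm_hasDerivWithin_le (C := 0) (hG k k.lt_succ_self)
    (fun x hx ↦ by rw [hG0 x hx, norm_zero]) (OrdConnected.convex ‹_›) hx₀ (hts 0)
  exact hne 0 (by simpa [hk] using hconst)

end HasDerivSeqOn

lemma eval_iterate_derivative_eq_of_natDegree_le {R : Type*} [Semiring R] {p : R[X]} {n : ℕ}
    (hp : p.natDegree ≤ n) (x y : R) :
    (derivative^[n] p).eval x = (derivative^[n] p).eval y := by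
  have hdeg : (derivative^[n] p).natDegree ≤ 0 :=
    (natDegree_iterate_derivative p n).trans (Nat.sub_eq_zero_of_le hp).le
  rw [eq_C_of_natDegree_le_zero hdeg, eval_C, eval_C]

theorem comparison_lemma_general {n k : ℕ} (hk : k < n) {s : Set ℝ} [s.OrdConnected] {x₀ : ℝ}
    (hx₀ : x₀ ∈ s) {p : ℝ[X]} (hdeg : p.natDegree ≤ n)
    (hp₀ : (derivative^[k + 1] p).eval x₀ = 0) {τ : Fin n → ℝ} (hτ : StrictMono τ)
    (hτs : ∀ i, τ i ∈ s) (hpτ : ∀ i : Fin n, 0 < (-1 : ℝ) ^ (n - 1 - (i : ℕ)) * p.eval (τ i))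
    {f : ℝ → ℝ} (hf : NTimesDiffOn n f s) (hf₀ : iteratedDerivWithin (k + 1) f s x₀ = 0)
    (hfτ : ∀ i, |f (τ i)| ≤ |p.eval (τ i)|)
    (hfn : ∀ x ∈ s, |iteratedDerivWithin n f s x| ≤ |(derivative^[n] p).eval x|) :
    |iteratedDerivWithin k f s x₀| ≤ |(derivative^[k] p).eval x₀| := by
  by_contra! hlt
  obtain ⟨γ, hγ, hγk⟩ := exists_abs_lt_one_eq_mul hlt
  let G (j : ℕ) (x : ℝ) : ℝ := (derivative^[j] p).eval x - γ * iteratedDerivWithin j f s x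
  have hG : HasDerivSeqOn n G s :=
    (hasDerivSeqOn_iterate_derivative n p s).sub_const_mul hf.hasDerivSeqOn γ
  have hGk : G k x₀ = 0 := sub_eq_zero.2 hγk
  have hGk' : G (k + 1) x₀ = 0 := by simp only [G, hp₀, hf₀, mul_zero, sub_zero]
  have hchanges : HasSignChanges (G 0) s (n - 1) := by
    obtain ⟨m, rfl⟩ : ∃ m, n = m + 1 := ⟨n - 1, by omega⟩
    simp only [G, iteratedDerivWithin_zero]
    exact HasSignChanges.sub_const_mul_of_alternance hτ hτs hpτ hfτ hγ
  have hγn (x) (hx : x ∈ s) :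
      |γ * iteratedDerivWithin n f s x| ≤ |(derivative^[n] p).eval x₀| := by
    rw [abs_mul, eval_iterate_derivative_eq_of_natDegree_le hdeg x₀ x]
    exact (mul_le_of_le_one_left (abs_nonneg _) hγ.le).trans (hfn x hx)
  obtain rfl | ⟨d, rfl⟩ : n = k + 1 ∨ ∃ d, n = k + 2 + d :=
    (Nat.eq_or_lt_of_le hk).imp Eq.symm Nat.exists_eq_add_of_le
  · refine hG.not_hasSignChanges_of_deriv_eq_zero hx₀ hGk (fun x hx ↦ ?_) hchanges
    have hfx : γ * iteratedDerivWithin (k + 1) f s x = 0 :=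
      abs_nonpos_iff.1 (by simpa only [hp₀, abs_zero] using hγn x hx)
    simp only [G, eval_iterate_derivative_eq_of_natDegree_le hdeg x x₀, hp₀, hfx, sub_zero]
  · have hchanges' : HasSignChanges (G 0) s (1 + d + k) := by convert hchanges using 1; omega
    obtain ⟨x, hx, y, hy, hneg⟩ :=
      (hG.hasSignChanges_of_double_zero hx₀ hGk hGk' hchanges').exists_mul_neg
    have hpn := eval_iterate_derivative_eq_of_natDegree_le hdeg
    simp only [G, hpn _ x₀] at hneg
    exact hneg.not_ge (mul_sub_mul_sub_nonneg_of_abs_le_abs (hγn x hx) (hγn y hy))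

/-- the comparison lemma. -/
theorem comparison_lemma (n k : ℕ) (σ x₀ : ℝ) (hn : 2 ≤ n) (hk1 : 1 ≤ k)
    (hk2 : k ≤ n - 1) (hσ : 0 ≤ σ) (hx₀ : x₀ ∈ Icc (-1:ℝ) 1)
    (p : Polynomial ℝ) (hdeg : p.natDegree ≤ n)
    (hp1 : (derivative^[k+1] p).eval x₀ = 0)
    (hpbd : ∀ x ∈ Icc (-1:ℝ) 1, |p.eval x| ≤ 1)
    (hp2 : ∃ τ : Fin n → ℝ, StrictMono τ ∧ (∀ i, τ i ∈ Icc (-1:ℝ) 1) ∧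
      ∀ i : Fin n, (-1:ℝ) ^ (n - 1 - (i:ℕ)) * p.eval (τ i) = 1)
    (hp3 : σ ≤ sSup {y | ∃ x ∈ Icc (-1:ℝ) 1, y = |(derivative^[n] p).eval x|})
    (f : ℝ → ℝ) (hf : NTimesDiffOn n f (Icc (-1:ℝ) 1))
    (hf1 : iteratedDerivWithin (k+1) f (Icc (-1:ℝ) 1) x₀ = 0)
    (hf2 : ∀ x ∈ Icc (-1:ℝ) 1, |f x| ≤ 1)
    (hf3 : ∀ x ∈ Icc (-1:ℝ) 1, |iteratedDerivWithin n f (Icc (-1:ℝ) 1) x| ≤ σ) :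
    |iteratedDerivWithin k f (Icc (-1:ℝ) 1) x₀| ≤ |(derivative^[k] p).eval x₀| := by
  obtain ⟨τ, hτ, hτs, hpτ⟩ := hp2
  have habs (i) : |p.eval (τ i)| = 1 := by
    rw [← abs_one, ← hpτ i, abs_mul, abs_neg_one_pow, one_mul]
  refine comparison_lemma_general (by omega) hx₀ hdeg hp1 hτ hτs
    (fun i ↦ (hpτ i).symm ▸ one_pos) hf hf1 (fun i ↦ (habs i).symm ▸ hf2 _ (hτs i))
    (fun x hx ↦ (hf3 x hx).trans (hp3.trans (csSup_le ⟨_, x₀, hx₀, rfl⟩ ?_)))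
  rintro _ ⟨y, -, rfl⟩
  rw [eval_iterate_derivative_eq_of_natDegree_le hdeg y x]
end

section
/- Let n ≥ 10 and let ω₂ be the largest zero of the third derivative T_n''' of the Chebyshev polynomial T_n. Then |T_n''(ω₂)| ≤ (8/55)·T_n''(1). -/
open Polynomial Set

/-!
Write `y = 1 - ω²` at a zero `ω` of `T_n'''`. Eliminating `T_n` and `T_n'` from the differential
equations of `T_n` and `T_n'` and the Pell identity `n² T_n² + (1 - x²) T_n'² = n²` gives
`T_n''(ω)² ((n² - 1)(n² - 4) y² + 3 (n² - 4) y + 9) = 9 T_n''(1)²`,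
so it is enough to keep the zeros of `T_n'''` away from `±1`. By parity `ω = cos t` with
`0 < t ≤ π/2`; a sign analysis of `sin⁵ t · T_n'''(cos t)` gives `n t ≥ 3π/2`, and concavity of
`sin` turns this into `n sin t ≥ 9 sin (π/6) = 9/2` for `n ≥ 9`.
-/

theorem one_sub_sq_mul_chebDeriv (n : ℤ) (k : ℕ) (x : ℝ) :
    (1 - x ^ 2) * chebDeriv n (k + 2) x =
      (2 * k + 1) * x * chebDeriv n (k + 1) x - (n ^ 2 - k ^ 2) * chebDeriv n k x :=
  Chebyshev.one_sub_X_sq_mul_iterate_derivative_T_eval n k x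

theorem one_sub_sq_mul_chebDeriv_two (n : ℤ) (x : ℝ) :
    (1 - x ^ 2) * chebDeriv n 2 x = x * chebDeriv n 1 x - n ^ 2 * chebDeriv n 0 x := by
  simpa using one_sub_sq_mul_chebDeriv n 0 x

theorem one_sub_sq_mul_chebDeriv_three (n : ℤ) (x : ℝ) :
    (1 - x ^ 2) * chebDeriv n 3 x =
      3 * x * chebDeriv n 2 x - (n ^ 2 - 1) * chebDeriv n 1 x := by
  have h := one_sub_sq_mul_chebDeriv n 1 x
  norm_num at h
  exact h

theorem chebDeriv_one_eq_mul_U (n : ℤ) (x : ℝ) :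
    chebDeriv n 1 x = n * (Chebyshev.U ℝ (n - 1)).eval x := by
  simp [chebDeriv, Chebyshev.T_derivative_eq_U]

theorem chebDeriv_pell (n : ℤ) (x : ℝ) :
    n ^ 2 * chebDeriv n 0 x ^ 2 + (1 - x ^ 2) * chebDeriv n 1 x ^ 2 = n ^ 2 := by
  have hU : (Chebyshev.U ℝ (n - 1)).eval x ^ 2 + (Chebyshev.U ℝ n).eval x ^ 2 -
      2 * x * (Chebyshev.U ℝ (n - 1)).eval x * (Chebyshev.U ℝ n).eval x = 1 := by
    simpa [← Chebyshev.S_comp_two_mul_X] using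
      congrArg (eval (2 * x)) (Chebyshev.S_sq_add_S_sq ℝ (n - 1))
  have hT : chebDeriv n 0 x =
      (Chebyshev.U ℝ n).eval x - x * (Chebyshev.U ℝ (n - 1)).eval x := by
    simp [chebDeriv, Chebyshev.T_eq_U_sub_X_mul_U]
  rw [chebDeriv_one_eq_mul_U, hT]
  linear_combination (n : ℝ) ^ 2 * hU

theorem chebDeriv_two_one (n : ℤ) : chebDeriv n 2 1 = n ^ 2 * (n ^ 2 - 1) / 3 := by
  rw [chebDeriv, Chebyshev.iterate_derivative_T_eval_one_eq_div]
  norm_num [Finset.prod_range_succ]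

theorem sq_chebDeriv_two_mul_of_chebDeriv_three_eq_zero {n : ℤ} {x : ℝ}
    (hx : chebDeriv n 3 x = 0) :
    chebDeriv n 2 x ^ 2 * (((n ^ 2 - 1) * (1 - x ^ 2)) * ((n ^ 2 - 4) * (1 - x ^ 2)) +
      3 * ((n ^ 2 - 4) * (1 - x ^ 2)) + 9) = 9 * chebDeriv n 2 1 ^ 2 := by
  have hT' : (n ^ 2 - 1) * chebDeriv n 1 x = 3 * x * chebDeriv n 2 x := by
    linear_combination one_sub_sq_mul_chebDeriv_three n x - (1 - x ^ 2) * hx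
  have hT : n ^ 2 * (n ^ 2 - 1) * chebDeriv n 0 x =
      (3 - (n ^ 2 + 2) * (1 - x ^ 2)) * chebDeriv n 2 x := by
    linear_combination (n ^ 2 - 1) * one_sub_sq_mul_chebDeriv_two n x + x * hT'
  calc _ = ((3 - (n ^ 2 + 2) * (1 - x ^ 2)) * chebDeriv n 2 x) ^ 2 +
        n ^ 2 * (1 - x ^ 2) * (3 * x * chebDeriv n 2 x) ^ 2 := by ring
    _ = n ^ 2 * (n ^ 2 - 1) ^ 2 *
        (n ^ 2 * chebDeriv n 0 x ^ 2 + (1 - x ^ 2) * chebDeriv n 1 x ^ 2) := by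
      rw [← hT, ← hT']; ring
    _ = 9 * chebDeriv n 2 1 ^ 2 := by rw [chebDeriv_pell, chebDeriv_two_one]; ring

theorem chebDeriv_neg (n : ℤ) (k : ℕ) (x : ℝ) :
    chebDeriv n k (-x) = (-1) ^ k * (n.negOnePow : ℤ) * chebDeriv n k x := by
  have h : (derivative^[k] (Chebyshev.T ℝ n)).comp (-X) =
      C ((-1) ^ k * ((n.negOnePow : ℤ) : ℝ)) * derivative^[k] (Chebyshev.T ℝ n) := by
    induction k with
    | zero => exact Polynomial.funext fun y => by simp [Chebyshev.T_eval_neg]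
    | succ k ih =>
      have hd := congrArg derivative ih
      rw [derivative_comp, derivative_C_mul, derivative_neg, derivative_X] at hd
      simp only [Function.iterate_succ_apply', pow_succ, C_mul, C_neg, C_1] at hd ⊢
      linear_combination -hd
  simpa [chebDeriv] using congrArg (eval x) h

theorem chebDeriv_abs_eq_zero_iff (n : ℤ) (k : ℕ) (x : ℝ) :
    chebDeriv n k |x| = 0 ↔ chebDeriv n k x = 0 := by
  rcases abs_choice x with h | h <;> simp [h, chebDeriv_neg]

theorem chebDeriv_one_le (n k : ℕ) {x : ℝ} (hx : 1 ≤ x) :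
    chebDeriv n k 1 ≤ chebDeriv n k x := by
  unfold chebDeriv
  have hspan := Chebyshev.T_iterate_derivative_mem_span_T (R := ℝ) n k
  generalize derivative^[k] (Chebyshev.T ℝ n) = P at hspan ⊢
  induction hspan using Submodule.span_induction with
  | mem P hP =>
    obtain ⟨m, -, rfl⟩ := hP
    simpa using Chebyshev.one_le_eval_T_real m hx
  | zero => simp
  | add P Q _ _ hP hQ => simpa using add_le_add hP hQ
  | smul a P _ hP =>
    simp only [nsmul_eq_mul, eval_mul, eval_natCast]
    gcongr

theorem chebDeriv_one_pos {n k : ℕ} (hk : k ≤ n) : 0 < chebDeriv n k 1 := by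
  rw [chebDeriv, Chebyshev.iterate_derivative_T_eval_one_eq_div]
  refine div_pos ?_ (by positivity)
  push_cast
  refine Finset.prod_pos fun l hl => sub_pos.2 ?_
  have hln : l < n := (Finset.mem_range.1 hl).trans_le hk
  gcongr

theorem abs_lt_one_of_chebDeriv_eq_zero {n k : ℕ} (hk : k ≤ n) {x : ℝ}
    (hx : chebDeriv n k x = 0) : |x| < 1 := by
  by_contra! h
  exact ((chebDeriv_one_pos hk).trans_le (chebDeriv_one_le n k h)).ne'
    ((chebDeriv_abs_eq_zero_iff n k x).2 hx)

/-- The angular form `sin³ t · T_n''(cos t) / n` of the second derivative of `T_n`, see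
`sin_pow_three_mul_chebDeriv_two`. The index `n` may be any real number. -/
noncomputable def angularSecond (n t : ℝ) : ℝ :=
  Real.cos t * Real.sin (n * t) - n * Real.sin t * Real.cos (n * t)

/-- The angular form `sin⁵ t · T_n'''(cos t) / n` of the third derivative of `T_n`, see
`sin_pow_five_mul_chebDeriv_three`. The index `n` may be any real number. -/
noncomputable def angularThird (n t : ℝ) : ℝ :=
  3 * Real.cos t * angularSecond n t - (n ^ 2 - 1) * Real.sin t ^ 2 * Real.sin (n * t)

theorem sin_mul_chebDeriv_one (n : ℤ) (t : ℝ) :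
    Real.sin t * chebDeriv n 1 (Real.cos t) = n * Real.sin (n * t) := by
  have hU := Chebyshev.U_real_cos t (n - 1)
  push_cast at hU
  rw [sub_add_cancel] at hU
  rw [chebDeriv_one_eq_mul_U]
  linear_combination (n : ℝ) * hU

theorem sin_pow_three_mul_chebDeriv_two (n : ℤ) (t : ℝ) :
    Real.sin t ^ 3 * chebDeriv n 2 (Real.cos t) = n * angularSecond n t := by
  have hode := one_sub_sq_mul_chebDeriv_two n (Real.cos t)
  have hT : chebDeriv n 0 (Real.cos t) = Real.cos (n * t) := by simp [chebDeriv]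
  rw [← Real.sin_sq, hT] at hode
  unfold angularSecond
  linear_combination Real.sin t * hode + Real.cos t * sin_mul_chebDeriv_one n t

theorem sin_pow_five_mul_chebDeriv_three (n : ℤ) (t : ℝ) :
    Real.sin t ^ 5 * chebDeriv n 3 (Real.cos t) = n * angularThird n t := by
  have hode := one_sub_sq_mul_chebDeriv_three n (Real.cos t)
  rw [← Real.sin_sq] at hode
  unfold angularThird
  linear_combination Real.sin t ^ 3 * hode +
    3 * Real.cos t * sin_pow_three_mul_chebDeriv_two n t -
    (n ^ 2 - 1) * Real.sin t ^ 2 * sin_mul_chebDeriv_one n t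

theorem hasDerivAt_angularSecond (n t : ℝ) :
    HasDerivAt (angularSecond n) ((n ^ 2 - 1) * Real.sin t * Real.sin (n * t)) t := by
  have hmul : HasDerivAt (fun s : ℝ => n * s) n t := hasDerivAt_const_mul n
  have h := ((Real.hasDerivAt_cos t).mul hmul.sin).sub
    (((Real.hasDerivAt_sin t).const_mul n).mul hmul.cos)
  exact h.congr_deriv (by ring)

theorem hasDerivAt_angularThird (n t : ℝ) :
    HasDerivAt (angularThird n) ((n ^ 2 - 4) * Real.sin t * angularSecond n t) t := by
  have hmul : HasDerivAt (fun s : ℝ => n * s) n t := hasDerivAt_const_mul n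
  have h := (((Real.hasDerivAt_cos t).const_mul 3).mul (hasDerivAt_angularSecond n t)).sub
    ((((Real.hasDerivAt_sin t).pow 2).const_mul (n ^ 2 - 1)).mul hmul.sin)
  refine h.congr_deriv ?_
  simp only [angularSecond, Pi.pow_apply]
  ring

theorem lt_of_hasDerivAt_pos {f f' : ℝ → ℝ} {a b : ℝ} (hab : a < b)
    (hf : ∀ x ∈ Icc a b, HasDerivAt f (f' x) x) (hf' : ∀ x ∈ Ioo a b, 0 < f' x) : f a < f b := by
  have hmono : StrictMonoOn f (Icc a b) :=
    strictMonoOn_of_hasDerivWithinAt_pos (convex_Icc a b)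
      (fun x hx => (hf x hx).continuousAt.continuousWithinAt)
      (fun x hx => (hf x (interior_subset hx)).hasDerivWithinAt)
      (by rwa [interior_Icc])
  exact hmono (left_mem_Icc.2 hab.le) (right_mem_Icc.2 hab.le) hab

theorem angularSecond_pos {n t : ℝ} (hn : 1 < n) (ht : 0 < t) (hnt : n * t ≤ Real.pi) :
    0 < angularSecond n t := by
  suffices h : angularSecond n 0 < angularSecond n t by simpa [angularSecond] using h
  refine lt_of_hasDerivAt_pos ht (fun x _ => hasDerivAt_angularSecond n x)
    fun x ⟨hx, hxt⟩ => ?_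
  have hnx : n * x < Real.pi := lt_of_lt_of_le (by gcongr) hnt
  have hsin : 0 < Real.sin x := Real.sin_pos_of_pos_of_lt_pi hx (by nlinarith)
  have hsin_mul : 0 < Real.sin (n * x) := Real.sin_pos_of_pos_of_lt_pi (by positivity) hnx
  have hcoeff : 0 < n ^ 2 - 1 := by nlinarith
  positivity

theorem angularThird_pos_of_mul_le_pi {n t : ℝ} (hn : 2 < n) (ht : 0 < t)
    (hnt : n * t ≤ Real.pi) : 0 < angularThird n t := by
  suffices h : angularThird n 0 < angularThird n t by
    simpa [angularThird, angularSecond] using h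
  refine lt_of_hasDerivAt_pos ht (fun x _ => hasDerivAt_angularThird n x)
    fun x ⟨hx, hxt⟩ => ?_
  have hnx : n * x < Real.pi := lt_of_lt_of_le (by gcongr) hnt
  have hsin : 0 < Real.sin x := Real.sin_pos_of_pos_of_lt_pi hx (by nlinarith)
  have hsecond : 0 < angularSecond n x := angularSecond_pos (by linarith) hx hnx.le
  have hcoeff : 0 < n ^ 2 - 4 := by nlinarith
  positivity

theorem angularThird_eq (n t : ℝ) :
    angularThird n t = ((n ^ 2 + 2) * Real.sin t ^ 2 - 3) * -Real.sin (n * t) +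
      3 * n * Real.sin t * Real.cos t * -Real.cos (n * t) := by
  unfold angularThird angularSecond
  linear_combination 3 * Real.sin (n * t) * Real.sin_sq_add_cos_sq t

theorem mul_sin_div_le_mul_sin {m n a t : ℝ} (hm : 0 < m) (hmn : m ≤ n) (ha : 0 ≤ a)
    (ham : a / m ≤ Real.pi) (hat : a ≤ n * t) (ht : t ≤ Real.pi / 2) :
    m * Real.sin (a / m) ≤ n * Real.sin t := by
  have hn : 0 < n := hm.trans_le hmn
  have hconcave : m / n * Real.sin (a / m) ≤ Real.sin (a / n) := by
    have h := strictConcaveOn_sin_Icc.concaveOn.2 ⟨by positivity, ham⟩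
      (left_mem_Icc.2 Real.pi_pos.le) (by positivity) (sub_nonneg.2 ((div_le_one hn).2 hmn))
      (add_sub_cancel (m / n) 1)
    have hscale : m / n * (a / m) = a / n := by field_simp
    simpa [hscale] using h
  have hmono : Real.sin (a / n) ≤ Real.sin t :=
    Real.sin_le_sin_of_le_of_le_pi_div_two (by linarith [Real.pi_pos, div_nonneg ha hn.le]) ht
      ((div_le_iff₀' hn).2 hat)
  calc m * Real.sin (a / m) = n * (m / n * Real.sin (a / m)) := by field_simp
    _ ≤ n * Real.sin t := by gcongr; exact hconcave.trans hmono

theorem angularThird_pos {n t : ℝ} (hn : 3 ≤ n) (ht : 0 < t)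
    (hnt : n * t < 3 * Real.pi / 2) : 0 < angularThird n t := by
  rcases le_total (n * t) Real.pi with hpi | hpi
  · exact angularThird_pos_of_mul_le_pi (by linarith) ht hpi
  have ht' : t < Real.pi / 2 := by nlinarith
  have hsin : 0 < Real.sin t := Real.sin_pos_of_pos_of_lt_pi ht (by linarith)
  have hcos : 0 < Real.cos t := Real.cos_pos_of_mem_Ioo ⟨by linarith, ht'⟩
  have hnsin : 2 ≤ n * Real.sin t := by
    simpa using mul_sin_div_le_mul_sin two_pos (by linarith) Real.pi_pos.le
      (by linarith) hpi ht'.le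
  have hcoeff : 0 < (n ^ 2 + 2) * Real.sin t ^ 2 - 3 := by nlinarith
  have hsin_mul : 0 ≤ -Real.sin (n * t) := by
    rw [← Real.sin_sub_pi]
    exact Real.sin_nonneg_of_nonneg_of_le_pi (by linarith) (by linarith)
  have hcos_mul : 0 < -Real.cos (n * t) :=
    neg_pos.2 (Real.cos_neg_of_pi_div_two_lt_of_lt (by linarith) (by linarith))
  rw [angularThird_eq]
  positivity

theorem three_pi_div_two_le_mul_of_chebDeriv_three_eq_zero {n : ℤ} (hn : 3 ≤ n) {t : ℝ}
    (ht : 0 < t) (h : chebDeriv n 3 (Real.cos t) = 0) : 3 * Real.pi / 2 ≤ n * t := by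
  by_contra! hnt
  have hpos : 0 < n * angularThird n t :=
    mul_pos (by positivity) (angularThird_pos (by exact_mod_cast hn) ht hnt)
  rw [← sin_pow_five_mul_chebDeriv_three, h, mul_zero] at hpos
  exact hpos.false

theorem le_sq_mul_one_sub_sq_of_chebDeriv_three_eq_zero {n : ℕ} (hn : 9 ≤ n) {x : ℝ}
    (hx : chebDeriv n 3 x = 0) : (9 / 2) ^ 2 ≤ n ^ 2 * (1 - x ^ 2) := by
  have hlt : |x| < 1 := abs_lt_one_of_chebDeriv_eq_zero (by omega) hx
  obtain ⟨t, ht, ht', hcos⟩ : ∃ t, 0 < t ∧ t ≤ Real.pi / 2 ∧ Real.cos t = |x| :=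
    ⟨Real.arccos |x|, Real.arccos_pos.2 hlt, Real.arccos_le_pi_div_two.2 (abs_nonneg x),
      Real.cos_arccos (by linarith [abs_nonneg x]) hlt.le⟩
  have hnt : 3 * Real.pi / 2 ≤ n * t := by
    rw [← chebDeriv_abs_eq_zero_iff, ← hcos] at hx
    exact_mod_cast three_pi_div_two_le_mul_of_chebDeriv_three_eq_zero (by omega) ht hx
  have hsin : 9 / 2 ≤ n * Real.sin t := by
    have h := mul_sin_div_le_mul_sin (m := 9) (by norm_num) (by exact_mod_cast hn)
      (by positivity) (by linarith [Real.pi_pos]) hnt ht'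
    rw [show 3 * Real.pi / 2 / 9 = Real.pi / 6 by ring, Real.sin_pi_div_six] at h
    linarith
  calc (9 / 2 : ℝ) ^ 2 ≤ (n * Real.sin t) ^ 2 := by gcongr
    _ = n ^ 2 * (1 - x ^ 2) := by rw [mul_pow, Real.sin_sq, hcos, sq_abs]

theorem cheb_second_deriv_at_last_critical_point_general (n : ℕ) (hn : 9 ≤ n) (ω : ℝ)
    (hω : chebDeriv n 3 ω = 0) : |chebDeriv n 2 ω| ≤ (8 / 55) * chebDeriv n 2 1 := by
  have hidentity := sq_chebDeriv_two_mul_of_chebDeriv_three_eq_zero hω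
  have hy := le_sq_mul_one_sub_sq_of_chebDeriv_three_eq_zero hn hω
  rw [Int.cast_natCast] at hidentity
  have hn_sq : (9 : ℝ) ^ 2 ≤ n ^ 2 := by gcongr; exact_mod_cast hn
  set y := 1 - ω ^ 2
  have hy_le : 81 * y ≤ n ^ 2 * y := by nlinarith
  have hfactor₁ : 20 ≤ ((n : ℝ) ^ 2 - 1) * y := by linarith
  have hfactor₂ : 77 / 4 ≤ ((n : ℝ) ^ 2 - 4) * y := by linarith
  have hamplitude : 9 * (55 / 8) ^ 2 ≤
      ((n : ℝ) ^ 2 - 1) * y * (((n : ℝ) ^ 2 - 4) * y) + 3 * (((n : ℝ) ^ 2 - 4) * y) + 9 := by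
    linarith [mul_le_mul hfactor₁ hfactor₂ (by norm_num) (by linarith)]
  refine abs_le_of_sq_le_sq ?_ (mul_nonneg (by norm_num) (chebDeriv_one_pos (by omega)).le)
  linarith [mul_le_mul_of_nonneg_left hamplitude (sq_nonneg (chebDeriv n 2 ω))]

/-- `|T_n''(ω₂)| ≤ (8/55)·T_n''(1)` for `n ≥ 10`, where `ω₂` is the
largest zero of `T_n'''`. -/
theorem cheb_second_deriv_at_last_critical_point (n : ℕ) (hn : 10 ≤ n) (ω₂ : ℝ)
    (hω : IsGreatest {x : ℝ | chebDeriv n 3 x = 0} ω₂) :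
    |chebDeriv n 2 ω₂| ≤ (8 / 55) * chebDeriv n 2 1 :=
  cheb_second_deriv_at_last_critical_point_general n (by omega) ω₂ hω.1
end

section
/- (Schur-type theorem for higher derivatives) Let n ≥ 2 and 1 ≤ k ≤ n-1, and let ω_k be the largest zero of T_n^{(k+1)}. Then max_{x₀∈[-1,1]} μ_k^*(x₀) = max{ |T_n^{(k)}(ω_k)|, μ_k^*(1) }. -/
open Polynomial Set

/-!
Let `(p, x₀)` maximise `q^{(k)}(y)` over all `q ∈ Q_n` and `y ∈ [-1, 1]` with `q^{(k+1)}(y) = 0`.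
If `x₀ = ±1`, the maximum is `μ_k^*(1)` by reflection. If `x₀` is interior, adding polynomials that
vanish where `|p| = 1` shows, through Laguerre's inequality, that there are at least `n` such
contact points. With `n + 1` of them `p` solves Pell's equation, so `p = ±T_n`, and Sonin's
monotonicity makes `ω_k` the best stationary point of `T_n^{(k)}`.

Exactly `n` contact points are impossible. Both endpoints are then contact points and
`(t² - 1) p' = m w` with `w` vanishing at all of them and `m` affine and positive on `[-1, 1]`. The
flow of the vector field `(t² - 1) / m` reparametrises `[-1, 1]`, so it moves `p` inside `Q_n` up to
second order; since `(t² - 1) / m` is convex, the second variation of `p^{(k)}(x₀)` along it is too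
large for a maximum.
-/

/-- The functional `p ↦ p^{(k)}(x)`, bundled as a linear map so that perturbations of `p` expand by
`map_add` and `map_smul`. -/
noncomputable def derivAt (k : ℕ) (x : ℝ) : ℝ[X] →ₗ[ℝ] ℝ :=
  leval x ∘ₗ derivative ^ k

section DerivAt

variable (k : ℕ) (x : ℝ) (f : ℝ[X])

lemma derivAt_apply : derivAt k x f = (derivative^[k] f).eval x := by
  simp [derivAt, Module.End.pow_apply, leval_apply]

lemma derivAt_zero : derivAt 0 x f = f.eval x := by
  simp [derivAt_apply]

lemma derivAt_succ : derivAt (k + 1) x f = derivAt k x (derivative f) := by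
  simp [derivAt_apply]

lemma continuous_derivAt : Continuous fun y ↦ derivAt k y f := by
  simpa only [derivAt_apply] using (derivative^[k] f).continuous

lemma hasDerivAt_derivAt : HasDerivAt (fun y ↦ derivAt k y f) (derivAt (k + 1) x f) x := by
  simpa only [derivAt_apply, Function.iterate_succ_apply'] using (derivative^[k] f).hasDerivAt x

lemma derivAt_comp_neg_X : derivAt k x (f.comp (-X)) = (-1) ^ k * derivAt k (-x) f := by
  induction k generalizing f with
  | zero => simp [derivAt_zero]
  | succ k ih =>
    have chain_rule : derivative (f.comp (-X)) = -(derivative f).comp (-X) := by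
      simp [derivative_comp]
    rw [derivAt_succ, derivAt_succ, chain_rule, map_neg, ih]
    ring

lemma derivAt_X_sub_C_mul (a : ℝ) :
    derivAt (k + 1) x ((X - C a) * f) =
      (x - a) * derivAt (k + 1) x f + (k + 1) * derivAt k x f := by
  have expand : (X - C a) * f = f * X - a • f := by rw [smul_eq_C_mul]; ring
  have leibniz : derivAt (k + 1) x (f * X) = derivAt (k + 1) x f * x + (k + 1) * derivAt k x f := by
    simp [derivAt_apply, iterate_derivative_mul_X]
  rw [expand, map_sub, leibniz, map_smul, smul_eq_mul]
  ring

lemma derivAt_linear_mul (a b : ℝ) :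
    derivAt (k + 1) x ((C b * X + C a) * f) =
      (b * x + a) * derivAt (k + 1) x f + (k + 1) * b * derivAt k x f := by
  have expand : (C b * X + C a) * f = b • ((X - C 0) * f) + a • f := by
    simp only [smul_eq_C_mul, C_0]; ring
  simp only [expand, map_add, map_smul, derivAt_X_sub_C_mul, smul_eq_mul]
  ring

lemma derivAt_X_sq_sub_one_mul :
    derivAt (k + 2) x ((X ^ 2 - 1) * f) = (x ^ 2 - 1) * derivAt (k + 2) x f +
      2 * (k + 2) * x * derivAt (k + 1) x f + (k + 2) * (k + 1) * derivAt k x f := by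
  have factor : (X ^ 2 - 1) * f = (X - C 1) * ((X - C (-1)) * f) := by
    simp only [C_1, C_neg]; ring
  simp only [factor, derivAt_X_sub_C_mul]
  push_cast
  ring

end DerivAt

section Laguerre

/-- The Laguerre expression `f'² - f f''`, nonnegative on the real line when `f` is real-rooted. -/
noncomputable def laguerreForm (f : ℝ[X]) : ℝ[X] :=
  derivative f ^ 2 - f * derivative (derivative f)

lemma laguerreForm_X_sub_C_mul (a : ℝ) (f : ℝ[X]) :
    laguerreForm ((X - C a) * f) = f ^ 2 + (X - C a) ^ 2 * laguerreForm f := by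
  simp only [laguerreForm, derivative_mul, derivative_add, derivative_X_sub_C, derivative_one]
  ring

lemma eval_laguerreForm_nonneg {f : ℝ[X]} (hf : f.Splits) (x : ℝ) :
    0 ≤ (laguerreForm f).eval x := by
  obtain ⟨s, hs⟩ := splits_iff_exists_multiset.1 hf
  rw [hs]
  generalize f.leadingCoeff = c
  clear hs
  induction s using Multiset.induction_on with
  | empty => simp [laguerreForm]
  | cons a s ih =>
    rw [Multiset.map_cons, Multiset.prod_cons, mul_left_comm, laguerreForm_X_sub_C_mul]
    simp only [eval_add, eval_pow, eval_mul, eval_sub, eval_X, eval_C] at ih ⊢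
    positivity

lemma eval_laguerreForm_pos_of_splits {f : ℝ[X]} (hf : f.Splits) (hd : 0 < f.natDegree) {x : ℝ}
    (hx : f.eval x ≠ 0) : 0 < (laguerreForm f).eval x := by
  obtain ⟨a, ha⟩ := hf.exists_eval_eq_zero (natDegree_pos_iff_degree_pos.1 hd).ne'
  obtain ⟨g, rfl⟩ := dvd_iff_isRoot.2 ha
  have hg : g.Splits := hf.of_dvd (ne_zero_of_natDegree_gt hd) (dvd_mul_left _ _)
  have hgx : g.eval x ≠ 0 := by
    rw [eval_mul] at hx
    exact right_ne_zero_of_mul hx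
  have := eval_laguerreForm_nonneg hg x
  rw [laguerreForm_X_sub_C_mul]
  simp only [eval_add, eval_pow, eval_mul, eval_sub, eval_X, eval_C]
  positivity

/-- All roots of `f` are real and simple, expressed by counting distinct real roots; nonzero
constants, and by convention `0`, satisfy it. -/
def HasSimpleRealRoots (f : ℝ[X]) : Prop :=
  f.natDegree ≤ f.roots.toFinset.card

lemma splits_derivative {f : ℝ[X]} (hf : f.Splits) : (derivative f).Splits := by
  have := card_roots_le_derivative f
  have := natDegree_derivative_le f
  rw [splits_iff_card_roots] at *
  exact le_antisymm (card_roots' _) (by lia)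

lemma HasSimpleRealRoots.splits {f : ℝ[X]} (hf : HasSimpleRealRoots f) : f.Splits :=
  splits_iff_card_roots.2 <|
    le_antisymm (card_roots' f) (hf.trans (Multiset.toFinset_card_le _))

lemma HasSimpleRealRoots.derivative {f : ℝ[X]} (hf : HasSimpleRealRoots f) :
    HasSimpleRealRoots (derivative f) := by
  have := card_roots_toFinset_le_derivative f
  have := natDegree_derivative_le f
  unfold HasSimpleRealRoots at *
  lia

lemma HasSimpleRealRoots.eval_laguerreForm_pos {f : ℝ[X]} (hf : HasSimpleRealRoots f)
    (hd : 0 < f.natDegree) (x : ℝ) : 0 < (laguerreForm f).eval x := by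
  by_cases hx : f.eval x = 0
  · have simple : f.rootMultiplicity x ≤ 1 := by
      rw [← count_roots]
      refine Multiset.nodup_iff_count_le_one.1 (Multiset.toFinset_card_eq_card_iff_nodup.1 ?_) x
      exact le_antisymm (Multiset.toFinset_card_le _) ((card_roots' f).trans hf)
    have hx' : (Polynomial.derivative f).eval x ≠ 0 := fun h0 ↦ simple.not_gt <|
      (one_lt_rootMultiplicity_iff_isRoot (ne_zero_of_natDegree_gt hd)).2 ⟨hx, h0⟩
    simp only [laguerreForm, eval_sub, eval_pow, eval_mul, hx, zero_mul, sub_zero]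
    positivity
  · exact eval_laguerreForm_pos_of_splits hf.splits hd hx

lemma natDegree_iterate_derivative_pos {f : ℝ[X]} {k : ℕ} (hk : k < f.natDegree) :
    0 < (derivative^[k] f).natDegree := by
  refine (Nat.sub_pos_of_lt hk).trans_le (le_natDegree_of_ne_zero ?_)
  rw [coeff_iterate_derivative, Nat.sub_add_cancel hk.le, nsmul_eq_mul, mul_ne_zero_iff]
  exact ⟨by exact_mod_cast (Nat.pos_of_ne_zero fun h ↦ hk.not_ge
    (Nat.descFactorial_eq_zero_iff_lt.1 h).le).ne', leadingCoeff_ne_zero.2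
    (ne_zero_of_natDegree_gt hk)⟩

lemma eval_laguerreForm_iterate_derivative (f : ℝ[X]) (k : ℕ) (x : ℝ) :
    (laguerreForm (derivative^[k] f)).eval x =
      derivAt (k + 1) x f ^ 2 - derivAt k x f * derivAt (k + 2) x f := by
  simp [laguerreForm, derivAt_apply, Function.iterate_succ_apply']

lemma HasSimpleRealRoots.derivAt_mul_lt {f : ℝ[X]} (hf : HasSimpleRealRoots f) {k : ℕ}
    (hk : k < f.natDegree) (x : ℝ) :
    derivAt k x f * derivAt (k + 2) x f < derivAt (k + 1) x f ^ 2 := by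
  have hfk : HasSimpleRealRoots (Polynomial.derivative^[k] f) :=
    Function.Iterate.rec HasSimpleRealRoots hf (fun _ h ↦ h.derivative) k
  rw [← sub_pos, ← eval_laguerreForm_iterate_derivative]
  exact hfk.eval_laguerreForm_pos (natDegree_iterate_derivative_pos hk) x

lemma derivAt_mul_lt_of_splits {f : ℝ[X]} (hf : f.Splits) {k : ℕ} (hk : k < f.natDegree) {x : ℝ}
    (hx : derivAt k x f ≠ 0) :
    derivAt k x f * derivAt (k + 2) x f < derivAt (k + 1) x f ^ 2 := by
  have hfk : (derivative^[k] f).Splits :=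
    Function.Iterate.rec Polynomial.Splits hf (fun _ h ↦ splits_derivative h) k
  rw [← sub_pos, ← eval_laguerreForm_iterate_derivative]
  exact eval_laguerreForm_pos_of_splits hfk (natDegree_iterate_derivative_pos hk)
    (derivAt_apply k x f ▸ hx)

end Laguerre

section Perturbation

open Filter Topology

/-- The class `Q_n`, the admissible polynomials of the extremal problems. -/
def unitPolys (n : ℕ) : Set ℝ[X] :=
  {p | p.natDegree ≤ n ∧ ∀ t ∈ Icc (-1 : ℝ) 1, |p.eval t| ≤ 1}

/-- `t` is a contact point of `p`: a point of `[-1, 1]` where `|p|` takes the value `1`, which is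
its maximum if `p` belongs to `unitPolys n`. -/
def IsContact (p : ℝ[X]) (t : ℝ) : Prop :=
  t ∈ Icc (-1 : ℝ) 1 ∧ |p.eval t| = 1

lemma IsContact.eval_mul_self {p : ℝ[X]} {t : ℝ} (ht : IsContact p t) :
    p.eval t * p.eval t = 1 := by
  rw [← abs_mul_abs_self, ht.2, one_mul]

lemma exists_eval_taylor (f : ℝ[X]) : ∃ R : ℝ × ℝ → ℝ, Continuous R ∧ ∀ t h,
    f.eval (t + h) = f.eval t + h * (derivative f).eval t +
      h ^ 2 / 2 * (derivative (derivative f)).eval t + h ^ 3 * R (t, h) := by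
  refine ⟨fun z ↦ ∑ i ∈ Finset.range f.natDegree, (hasseDeriv (i + 3) f).eval z.1 * z.2 ^ i,
    by fun_prop, fun t h ↦ ?_⟩
  have second : derivative (derivative f) = (2 : ℝ) • hasseDeriv 2 f := by
    simpa [ofNat_smul_eq_nsmul] using (congr_fun (factorial_smul_hasseDeriv (R := ℝ) 2) f).symm
  have expansion := eval_eq_sum_range' (n := f.natDegree + 3)
    (by rw [natDegree_taylor]; lia : (taylor t f).natDegree < _) h
  rw [taylor_eval, add_comm h] at expansion
  simp only [expansion, taylor_coeff, Finset.sum_range_succ', second, eval_smul, smul_eq_mul,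
    zero_add, hasseDeriv_one, hasseDeriv_zero, LinearMap.id_apply, Finset.mul_sum, pow_add,
    pow_zero, mul_left_comm _ (h ^ _) (h ^ _)]
  ring_nf

lemma exists_derivAt_taylor (k : ℕ) (f : ℝ[X]) : ∃ R : ℝ × ℝ → ℝ, Continuous R ∧ ∀ t h,
    derivAt k (t + h) f = derivAt k t f + h * derivAt (k + 1) t f +
      h ^ 2 / 2 * derivAt (k + 2) t f + h ^ 3 * R (t, h) := by
  obtain ⟨R, hR, taylor⟩ := exists_eval_taylor (derivative^[k] f)
  refine ⟨R, hR, fun t h ↦ ?_⟩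
  simpa only [derivAt_apply, Function.iterate_succ_apply'] using taylor t h

variable {p : ℝ[X]}

/-- Away from the contact points the bound survives any small perturbation; compactness then leaves
only neighbourhoods of the contact points to control. -/
lemma eventually_abs_eval_le_one (hp : ∀ t ∈ Icc (-1 : ℝ) 1, |p.eval t| ≤ 1) {q : ℝ → ℝ[X]}
    (hq0 : q 0 = p) (hq : Continuous fun z : ℝ × ℝ ↦ (q z.1).eval z.2)
    (hcontact : ∀ t, IsContact p t → ∀ᶠ z : ℝ × ℝ in 𝓝 (0, t),
      0 < z.1 → z.2 ∈ Icc (-1 : ℝ) 1 → p.eval t * (q z.1).eval z.2 ≤ 1) :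
    ∀ᶠ s in 𝓝[>] (0 : ℝ), ∀ t ∈ Icc (-1 : ℝ) 1, |(q s).eval t| ≤ 1 := by
  rw [eventually_nhdsWithin_iff]
  suffices h : ∀ᶠ s in 𝓝 (0 : ℝ), ∀ t ∈ Icc (-1 : ℝ) 1, s ∈ Ioi 0 → t ∈ Icc (-1 : ℝ) 1 →
      |(q s).eval t| ≤ 1 from h.mono fun s hs hs0 t ht ↦ hs t ht hs0 ht
  refine isCompact_Icc.eventually_forall_of_forall_eventually fun t ht ↦ ?_
  rcases (hp t ht).lt_or_eq with hlt | heq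
  · have near : ∀ᶠ z : ℝ × ℝ in 𝓝 (0, t), |(q z.1).eval z.2| < 1 :=
      hq.abs.continuousAt.eventually_lt_const (by simpa [hq0] using hlt)
    exact near.mono fun z hz _ _ ↦ hz.le
  · have contact : IsContact p t := ⟨ht, heq⟩
    have lower : ∀ᶠ z : ℝ × ℝ in 𝓝 (0, t), -1 < p.eval t * (q z.1).eval z.2 :=
      (hq.const_mul _).continuousAt.eventually_const_lt (by simp [hq0, contact.eval_mul_self])
    filter_upwards [lower, hcontact t contact] with z hlow hup hz0 hz
    rw [← one_mul |_|, ← heq, ← abs_mul, heq]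
    exact abs_le.2 ⟨hlow.le, hup hz0 hz⟩

lemma eval_mul_eval_le_one (hp : ∀ t ∈ Icc (-1 : ℝ) 1, |p.eval t| ≤ 1) {t z : ℝ}
    (ht : t ∈ Icc (-1 : ℝ) 1) (hz : z ∈ Icc (-1 : ℝ) 1) : p.eval t * p.eval z ≤ 1 :=
  (le_abs_self _).trans <| by
    rw [abs_mul]; exact mul_le_one₀ (hp t ht) (abs_nonneg _) (hp z hz)

lemma eventually_abs_eval_add_smul_le_one (hp : ∀ t ∈ Icc (-1 : ℝ) 1, |p.eval t| ≤ 1) {r : ℝ[X]}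
    (hr : ∀ t, IsContact p t → p.eval t * r.eval t < 0) :
    ∀ᶠ s in 𝓝[>] (0 : ℝ), ∀ t ∈ Icc (-1 : ℝ) 1, |(p + s • r).eval t| ≤ 1 := by
  refine eventually_abs_eval_le_one hp (by simp) (by simp only [eval_add, eval_smul]; fun_prop)
    fun t ht ↦ ?_
  have inward : ∀ᶠ z : ℝ × ℝ in 𝓝 (0, t), p.eval t * r.eval z.2 < 0 :=
    Tendsto.eventually_lt_const (hr t ht) (by fun_prop : ContinuousAt _ _)
  filter_upwards [inward] with z hz hz0 hzI
  have := eval_mul_eval_le_one hp ht.1 hzI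
  rw [eval_add, eval_smul, smul_eq_mul]
  nlinarith [mul_neg_of_pos_of_neg hz0 hz]

/-- Up to second order, `p + s w + s² u` is `p` transported along the vector field `D`, plus
`s² (u - D² p'' / 2)`; the transport does not leave `[-1, 1]`, so only the latter matters. -/
lemma eventually_abs_eval_add_smul_add_sq_smul_le_one
    (hp : ∀ t ∈ Icc (-1 : ℝ) 1, |p.eval t| ≤ 1) {w u : ℝ[X]} {D : ℝ → ℝ}
    (hD : ∀ t ∈ Icc (-1 : ℝ) 1, ContinuousAt D t)
    (hw : ∀ t ∈ Icc (-1 : ℝ) 1, w.eval t = D t * (derivative p).eval t)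
    (hflow : ∀ᶠ s in 𝓝[>] (0 : ℝ), ∀ t ∈ Icc (-1 : ℝ) 1, t + s * D t ∈ Icc (-1 : ℝ) 1)
    (hu : ∀ t, IsContact p t →
      p.eval t * (u.eval t - D t ^ 2 / 2 * (derivative (derivative p)).eval t) < 0) :
    ∀ᶠ s in 𝓝[>] (0 : ℝ), ∀ t ∈ Icc (-1 : ℝ) 1, |(p + s • w + s ^ 2 • u).eval t| ≤ 1 := by
  obtain ⟨R, hR, taylor⟩ := exists_eval_taylor p
  refine eventually_abs_eval_le_one hp (by simp) (by simp only [eval_add, eval_smul]; fun_prop)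
    fun t ht ↦ ?_
  have inward : ∀ᶠ z : ℝ × ℝ in 𝓝 (0, t), p.eval t * (u.eval z.2 -
      D z.2 ^ 2 / 2 * (derivative (derivative p)).eval z.2 -
        z.1 * D z.2 ^ 3 * R (z.2, z.1 * D z.2)) < 0 := by
    refine Tendsto.eventually_lt_const ?_
      (by fun_prop (disch := first | exact two_ne_zero | exact ht.1) : ContinuousAt _ _)
    simpa using hu t ht
  filter_upwards [inward, (eventually_nhdsWithin_iff.1 hflow).prod_inl_nhds t]
    with z hz hzflow hz0 hzI
  have := eval_mul_eval_le_one hp ht.1 (hzflow hz0 _ hzI)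
  rw [taylor] at this
  rw [eval_add, eval_add, eval_smul, eval_smul, hw _ hzI, smul_eq_mul, smul_eq_mul]
  nlinarith [mul_neg_of_pos_of_neg (pow_pos hz0 2) hz]

end Perturbation

section Extremal

open Filter Topology

variable {n k : ℕ} {p : ℝ[X]} {x₀ : ℝ}

/-- `(p, x₀)` realises `M = max { q^{(k)}(y) : q ∈ Q_n, y ∈ [-1, 1], q^{(k+1)}(y) = 0 }`. -/
structure IsSchurMax (n k : ℕ) (p : ℝ[X]) (x₀ : ℝ) : Prop where
  mem : p ∈ unitPolys n
  point_mem : x₀ ∈ Icc (-1 : ℝ) 1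
  stationary : derivAt (k + 1) x₀ p = 0
  derivAt_le : ∀ q ∈ unitPolys n, ∀ y ∈ Icc (-1 : ℝ) 1, derivAt (k + 1) y q = 0 →
    derivAt k y q ≤ derivAt k x₀ p

lemma natDegree_smul_le_of_le {r : ℝ[X]} (hr : r.natDegree ≤ n) (c : ℝ) :
    (c • r).natDegree ≤ n :=
  (natDegree_smul_le c r).trans hr

lemma eventually_add_smul_mem_unitPolys (hp : p ∈ unitPolys n) {r : ℝ[X]} (hrn : r.natDegree ≤ n)
    (hr : ∀ t, IsContact p t → p.eval t * r.eval t ≤ 0) {δ : ℝ} (hδ : 0 < δ) :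
    ∀ᶠ s in 𝓝[>] (0 : ℝ), p + s • (r - δ • p) ∈ unitPolys n := by
  have strict : ∀ t, IsContact p t → p.eval t * (r - δ • p).eval t < 0 := fun t ht ↦ by
    rw [eval_sub, eval_smul, smul_eq_mul, mul_sub, mul_left_comm, ht.eval_mul_self]
    linarith [hr t ht]
  filter_upwards [eventually_abs_eval_add_smul_le_one hp.2 strict] with s hs
  have hdeg : (r - δ • p).natDegree ≤ n :=
    (natDegree_sub_le_of_le hrn (natDegree_smul_le_of_le hp.1 δ)).trans (max_self n).le
  exact ⟨natDegree_add_le_of_degree_le hp.1 (natDegree_smul_le_of_le hdeg s), hs⟩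

namespace IsSchurMax

lemma derivAt_pos (h : IsSchurMax n k p x₀) (hkn : k ≤ n) : 0 < derivAt k x₀ p := by
  have hmem : (X ^ k : ℝ[X]) ∈ unitPolys n := by
    refine ⟨by simpa using hkn, fun t ht ↦ ?_⟩
    rw [eval_pow, eval_X, abs_pow]
    exact pow_le_one₀ (abs_nonneg t) (abs_le.2 ht)
  refine lt_of_lt_of_le ?_ (h.derivAt_le _ hmem 0 (by simp) ?_)
  · simpa [derivAt_apply, iterate_derivative_X_pow_eq_smul, Nat.descFactorial_self]
      using Nat.factorial_pos k
  · simp [derivAt_apply, iterate_derivative_eq_zero]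

lemma derivAt_nonpos_of_stationary (h : IsSchurMax n k p x₀) {r : ℝ[X]} (hrn : r.natDegree ≤ n)
    (hr : ∀ t, IsContact p t → p.eval t * r.eval t ≤ 0)
    (hr1 : derivAt (k + 1) x₀ r = 0) : derivAt k x₀ r ≤ 0 := by
  by_contra! hpos
  obtain ⟨δ, hδ, hδM⟩ := exists_pos_mul_lt hpos (derivAt k x₀ p)
  obtain ⟨s, hs, hs0⟩ := ((eventually_add_smul_mem_unitPolys h.mem hrn hr hδ).and
    self_mem_nhdsWithin).exists
  have := h.derivAt_le _ hs x₀ h.point_mem (by simp [h.stationary, hr1])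
  simp only [map_add, map_smul, map_sub, smul_eq_mul] at this
  nlinarith [mul_pos (mem_Ioi.1 hs0) (sub_pos.2 hδM)]

end IsSchurMax

/-- An `IsSchurMax` pair for which `p^{(k)}` has a positive, nondegenerate maximum at an interior
point. -/
structure IsInteriorSchurMax (n k : ℕ) (p : ℝ[X]) (x₀ : ℝ) : Prop extends IsSchurMax n k p x₀ where
  interior : x₀ ∈ Ioo (-1 : ℝ) 1
  pos : 0 < derivAt k x₀ p
  concave : derivAt (k + 2) x₀ p < 0

namespace IsInteriorSchurMax

lemma eventually_derivAt_lt (h : IsInteriorSchurMax n k p x₀) :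
    ∀ᶠ y in 𝓝[≠] (0 : ℝ), derivAt k (x₀ + y) p < derivAt k x₀ p := by
  obtain ⟨R, hR, taylor⟩ := exists_derivAt_taylor k p
  have near : ∀ᶠ y in 𝓝 (0 : ℝ), derivAt (k + 2) x₀ p / 2 + y * R (x₀, y) < 0 := by
    refine Tendsto.eventually_lt_const ?_
      (by fun_prop (disch := exact two_ne_zero) : ContinuousAt _ _)
    simpa using div_neg_of_neg_of_pos h.concave two_pos
  filter_upwards [nhdsWithin_le_nhds near, self_mem_nhdsWithin] with y hy hy0
  rw [taylor, h.stationary]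
  nlinarith [mul_neg_of_pos_of_neg (sq_pos_of_ne_zero hy0) hy]

lemma exists_Icc_derivAt_lt (h : IsInteriorSchurMax n k p x₀) :
    ∃ ρ > 0, Icc (x₀ - ρ) (x₀ + ρ) ⊆ Icc (-1) 1 ∧
    derivAt k (x₀ - ρ) p < derivAt k x₀ p ∧ derivAt k (x₀ + ρ) p < derivAt k x₀ p := by
  obtain ⟨ε, hε, hball⟩ := Metric.eventually_nhds_iff.1
    (eventually_nhdsWithin_iff.1 h.eventually_derivAt_lt)
  obtain ⟨ρ, hρ, hρlt⟩ := exists_between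
    (lt_min hε (lt_min (neg_lt_iff_pos_add'.1 h.interior.1) (sub_pos.2 h.interior.2)))
  obtain ⟨hρε, hρl, hρr⟩ : ρ < ε ∧ ρ < 1 + x₀ ∧ ρ < 1 - x₀ := by simpa only [lt_min_iff] using hρlt
  refine ⟨ρ, hρ, Icc_subset_Icc (by linarith) (by linarith), ?_, ?_⟩
  · exact sub_eq_add_neg x₀ ρ ▸ hball (by simpa [abs_of_pos hρ]) (by simpa using hρ.ne')
  · exact hball (by simpa [abs_of_pos hρ]) hρ.ne'

/-- The maximum of `q^{(k)}` near `x₀` is interior to a fixed interval, hence a critical point. -/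
lemma eventually_derivAt_le {ι : Type*} {l : Filter ι} (h : IsInteriorSchurMax n k p x₀)
    {q : ι → ℝ[X]} {x : ι → ℝ} (hq : ∀ᶠ s in l, q s ∈ unitPolys n)
    (hqlim : ∀ y, Tendsto (fun s ↦ derivAt k y (q s)) l (𝓝 (derivAt k y p)))
    (hx : Tendsto x l (𝓝 x₀)) :
    ∀ᶠ s in l, derivAt k (x s) (q s) ≤ derivAt k x₀ p := by
  obtain ⟨ρ, hρ, hsub, hleft, hright⟩ := h.exists_Icc_derivAt_lt
  filter_upwards [hq, hx.eventually (Icc_mem_nhds (sub_lt_self x₀ hρ) (lt_add_of_pos_right x₀ hρ)),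
    (hqlim _).eventually_lt_const hleft, (hqlim _).eventually_lt_const hright]
    with s hqs hxs hls hrs
  by_contra! hgt
  have boundary : ∀ z ∈ Icc (x₀ - ρ) (x₀ + ρ) \ Ioo (x₀ - ρ) (x₀ + ρ),
      derivAt k z (q s) < derivAt k (x s) (q s) := by
    rw [Icc_sdiff_Ioo_same (by linarith)]
    rintro z (rfl | rfl)
    exacts [hls.trans hgt, hrs.trans hgt]
  obtain ⟨y, hy, hmax⟩ := isCompact_Icc.exists_isMaxOn_mem_subset
    (continuous_derivAt k (q s)).continuousOn hxs boundary
  have critical : derivAt (k + 1) y (q s) = 0 :=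
    (hmax.isLocalMax (Icc_mem_nhds hy.1 hy.2)).hasDerivAt_eq_zero (hasDerivAt_derivAt k y (q s))
  exact (hgt.trans_le (hmax hxs)).not_ge
    (h.derivAt_le _ hqs y (hsub (Ioo_subset_Icc_self hy)) critical)

lemma derivAt_nonpos (h : IsInteriorSchurMax n k p x₀) {r : ℝ[X]} (hrn : r.natDegree ≤ n)
    (hr : ∀ t, IsContact p t → p.eval t * r.eval t ≤ 0) : derivAt k x₀ r ≤ 0 := by
  by_contra! hpos
  obtain ⟨δ, hδ, hδM⟩ := exists_pos_mul_lt hpos (derivAt k x₀ p)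
  have hlim : ∀ y, Tendsto (fun s : ℝ ↦ derivAt k y (p + s • (r - δ • p))) (𝓝[>] 0)
      (𝓝 (derivAt k y p)) := fun y ↦ by
    simp only [map_add, map_smul, smul_eq_mul]
    exact (Continuous.tendsto' (by fun_prop) _ _ (by simp)).mono_left nhdsWithin_le_nhds
  have hle := h.eventually_derivAt_le (eventually_add_smul_mem_unitPolys h.mem hrn hr hδ) hlim
    tendsto_const_nhds
  obtain ⟨s, hs, hs0⟩ := (hle.and self_mem_nhdsWithin).exists
  simp only [map_add, map_smul, map_sub, smul_eq_mul] at hs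
  nlinarith [mul_pos (mem_Ioi.1 hs0) (sub_pos.2 hδM)]

lemma derivAt_eq_zero (h : IsInteriorSchurMax n k p x₀) {r : ℝ[X]} (hrn : r.natDegree ≤ n)
    (hr : ∀ t, IsContact p t → r.eval t = 0) : derivAt k x₀ r = 0 := by
  refine le_antisymm (h.derivAt_nonpos hrn fun t ht ↦ by simp [hr t ht]) ?_
  simpa using h.derivAt_nonpos (r := -r) (by simpa) fun t ht ↦ by simp [hr t ht]

end IsInteriorSchurMax

end Extremal

section Nodal

open Lagrange

lemma nodal_dvd_of_forall_eval_eq_zero {E : Finset ℝ} {f : ℝ[X]} (hf : ∀ t ∈ E, f.eval t = 0) :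
    nodal E id ∣ f :=
  Finset.prod_dvd_of_coprime
    (fun _ _ _ _ hne ↦ pairwise_coprime_X_sub_C Function.injective_id hne)
    fun t ht ↦ dvd_iff_isRoot.2 (hf t ht)

lemma eval_nodal_eq_zero {E : Finset ℝ} {t : ℝ} (ht : t ∈ E) : (nodal E id).eval t = 0 :=
  eval_nodal_at_node (v := id) ht

lemma eval_nodal_erase_ne_zero (E : Finset ℝ) (t : ℝ) : (nodal (E.erase t) id).eval t ≠ 0 :=
  eval_nodal_not_at_node fun _ hs ↦ (Finset.ne_of_mem_erase hs).symm

lemma eval_derivative_nodal {E : Finset ℝ} {t : ℝ} (ht : t ∈ E) :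
    (derivative (nodal E id)).eval t = (nodal (E.erase t) id).eval t :=
  eval_nodal_derivative_eval_node_eq (v := id) ht

lemma hasSimpleRealRoots_nodal (E : Finset ℝ) : HasSimpleRealRoots (nodal E id) := by
  have roots : (nodal E id).roots = E.val := roots_prod_X_sub_C E
  rw [HasSimpleRealRoots, natDegree_nodal, roots, Finset.val_toFinset]

lemma splits_of_nodal_dvd {E : Finset ℝ} {f : ℝ[X]} (hE : nodal E id ∣ f)
    (hdeg : f.natDegree ≤ E.card + 1) : f.Splits := by
  obtain ⟨g, rfl⟩ := hE
  by_cases hg : g = 0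
  · simp [hg]
  · rw [nodal_monic.natDegree_mul' hg, natDegree_nodal] at hdeg
    exact (hasSimpleRealRoots_nodal E).splits.mul (Splits.of_natDegree_le_one (by lia))

end Nodal

section Contacts

variable {n k : ℕ} {p : ℝ[X]} {x₀ t : ℝ} {E : Finset ℝ}

lemma IsContact.eval_derivative_eq_zero (hp : p ∈ unitPolys n) (ht : IsContact p t)
    (hl : t ≠ -1) (hr : t ≠ 1) : (derivative p).eval t = 0 := by
  have Icc_mem : Icc (-1 : ℝ) 1 ∈ nhds t :=
    Icc_mem_nhds (ht.1.1.lt_of_ne hl.symm) (ht.1.2.lt_of_ne hr)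
  have local_max : IsLocalMax (fun y ↦ p.eval t * p.eval y) t := by
    filter_upwards [Icc_mem] with y hy
    rw [ht.eval_mul_self]
    exact eval_mul_eval_le_one hp.2 ht.1 hy
  have := local_max.hasDerivAt_eq_zero ((p.hasDerivAt t).const_mul _)
  exact (mul_eq_zero.1 this).resolve_left (left_ne_zero_of_mul_eq_one ht.eval_mul_self)

lemma exists_finset_contacts (hp' : derivative p ≠ 0) :
    ∃ E : Finset ℝ, ∀ t, t ∈ E ↔ IsContact p t := by
  have hne : p ^ 2 - 1 ≠ 0 := fun h0 ↦ by
    have := congr_arg derivative h0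
    simp only [derivative_sub, derivative_sq, derivative_one, sub_zero, derivative_zero,
      mul_eq_zero, hp', or_false, C_eq_zero, two_ne_zero, false_or] at this
    exact hp' (by rw [this, derivative_zero])
  have finite : {t | IsContact p t}.Finite := by
    refine (p ^ 2 - 1).roots.toFinset.finite_toSet.subset fun t ht ↦ ?_
    rw [Finset.mem_coe, Multiset.mem_toFinset, mem_roots hne]
    simp [IsRoot, sq, ht.eval_mul_self]
  exact ⟨finite.toFinset, fun t ↦ finite.mem_toFinset⟩

lemma nodal_sdiff_dvd_derivative (hp : p ∈ unitPolys n) (hE : ∀ t ∈ E, IsContact p t) :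
    Lagrange.nodal (E \ {-1, 1}) id ∣ derivative p :=
  nodal_dvd_of_forall_eval_eq_zero fun t ht ↦ by
    simp only [Finset.mem_sdiff, Finset.mem_insert, Finset.mem_singleton, not_or] at ht
    exact (hE t ht.1).eval_derivative_eq_zero hp ht.2.1 ht.2.2

lemma card_le_card_sdiff_endpoints (E : Finset ℝ) : E.card ≤ (E \ {-1, 1}).card + 2 :=
  Nat.sub_le_iff_le_add.1 <| (Nat.sub_le_sub_left Finset.card_le_two _).trans
    (Finset.le_card_sdiff _ _)

namespace IsSchurMax

lemma derivative_ne_zero (h : IsSchurMax n k p x₀) (hk : 1 ≤ k) (hkn : k ≤ n) :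
    derivative p ≠ 0 := by
  obtain ⟨j, rfl⟩ := Nat.exists_eq_add_of_le' hk
  intro h0
  have := h.derivAt_pos hkn
  simp [derivAt_succ, h0] at this

/-- With fewer than `n` contact points, a polynomial vanishing at all of them could be added to `p`
without changing `p^{(k+1)}(x₀)`, and would increase `p^{(k)}(x₀)` by Laguerre's inequality. -/
lemma le_card_contacts (h : IsSchurMax n k p x₀) (hk : 1 ≤ k) (hkn : k + 1 ≤ n)
    (hE : ∀ t, IsContact p t → t ∈ E) : n ≤ E.card := by
  by_contra! hlt
  obtain ⟨F, hEF, hF⟩ := Infinite.exists_superset_card_eq E (n - 1) (by lia)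
  obtain ⟨j, rfl⟩ := Nat.exists_eq_add_of_le' hk
  set w := Lagrange.nodal F id with hw
  have hwn : w.natDegree = n - 1 := by rw [hw, Lagrange.natDegree_nodal, hF]
  have laguerre := (hasSimpleRealRoots_nodal F).derivAt_mul_lt (k := j)
    (by rw [← hw, hwn]; lia) x₀
  have hXw : ((X - C x₀) * w).natDegree ≤ n := by
    refine natDegree_mul_le.trans ?_
    rw [natDegree_X_sub_C]
    lia
  have key := h.derivAt_nonpos_of_stationary
    (r := ((j + 2) * derivAt (j + 1) x₀ w) • w - derivAt (j + 2) x₀ w • ((X - C x₀) * w))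
    ((natDegree_sub_le_of_le (natDegree_smul_le_of_le (by lia) _)
      (natDegree_smul_le_of_le hXw _)).trans (max_self n).le)
    (fun t ht ↦ by
      have hwt : w.eval t = 0 := eval_nodal_eq_zero (hEF (hE t ht))
      simp [hwt])
    (by
      simp only [map_sub, map_smul, derivAt_X_sub_C_mul, smul_eq_mul]
      push_cast
      ring)
  simp only [map_sub, map_smul, derivAt_X_sub_C_mul, smul_eq_mul] at key
  nlinarith [sq_nonneg (derivAt (j + 1) x₀ w), (Nat.cast_nonneg j : (0 : ℝ) ≤ j)]

lemma derivAt_add_two_neg (h : IsSchurMax n k p x₀) (hk : 1 ≤ k) (hkn : k + 2 ≤ n) :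
    derivAt (k + 2) x₀ p < 0 := by
  have hM := h.derivAt_pos (by lia)
  have hp' := h.derivative_ne_zero hk (by lia)
  obtain ⟨E, hE⟩ := exists_finset_contacts hp'
  have hdvd := nodal_sdiff_dvd_derivative h.mem fun t ht ↦ (hE t).1 ht
  have hcard := h.le_card_contacts hk (by lia) fun t ↦ (hE t).2
  have hsdiff := card_le_card_sdiff_endpoints E
  have hdeg := natDegree_le_of_dvd hdvd hp'
  have hle := (natDegree_derivative_le p).trans (Nat.sub_le_sub_right h.mem.1 1)
  rw [Lagrange.natDegree_nodal] at hdeg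
  obtain ⟨j, rfl⟩ := Nat.exists_eq_add_of_le' hk
  have laguerre := derivAt_mul_lt_of_splits (splits_of_nodal_dvd hdvd (by lia)) (k := j) (x := x₀)
    (by lia) (by rw [← derivAt_succ]; exact hM.ne')
  simp only [← derivAt_succ, h.stationary] at laguerre
  exact neg_of_mul_neg_right (laguerre.trans_eq (zero_pow two_ne_zero)) hM.le

lemma isInteriorSchurMax (h : IsSchurMax n k p x₀) (hk : 1 ≤ k) (hkn : k + 2 ≤ n)
    (hx₀ : x₀ ∈ Ioo (-1 : ℝ) 1) : IsInteriorSchurMax n k p x₀ :=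
  ⟨h, hx₀, h.derivAt_pos (by lia), h.derivAt_add_two_neg hk hkn⟩

end IsSchurMax

/-- The perturbation `(X + e) p'` increases `p^{(k)}(x₀)` and can only be blocked at `e`. -/
lemma IsInteriorSchurMax.isContact_endpoint (h : IsInteriorSchurMax n k p x₀) (hk : 1 ≤ k) {e : ℝ}
    (he : e = 1 ∨ e = -1) : IsContact p e ∧ 0 < p.eval e * (e * (derivative p).eval e) := by
  have hsq : e * e = 1 := by rcases he with rfl | rfl <;> norm_num
  obtain ⟨j, rfl⟩ := Nat.exists_eq_add_of_le' hk
  set r := (X - C (-e)) * derivative p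
  have gain : 0 < derivAt (j + 1) x₀ r := by
    have := h.pos
    rw [derivAt_X_sub_C_mul, ← derivAt_succ, ← derivAt_succ, h.stationary, mul_zero, zero_add]
    positivity
  have hdeg : r.natDegree ≤ n := by
    have := h.mem.1
    by_cases hp' : derivative p = 0
    · simp [r, hp']
    · have := natDegree_derivative_lt (p := p) fun h0 ↦ hp' (derivative_of_natDegree_zero h0)
      rw [(monic_X_sub_C _).natDegree_mul' hp', natDegree_X_sub_C]
      lia
  obtain ⟨t, ht, hblock⟩ : ∃ t, IsContact p t ∧ 0 < p.eval t * r.eval t := by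
    by_contra! hr
    exact (h.derivAt_nonpos hdeg hr).not_gt gain
  simp only [r, eval_mul, eval_sub, eval_X, eval_C, sub_neg_eq_add] at hblock
  obtain rfl : t = e := by
    by_contra hne
    have hne' : t ≠ -e := by
      rintro rfl
      simp at hblock
    have critical := ht.eval_derivative_eq_zero h.mem
      (by rcases he with rfl | rfl <;> simp_all) (by rcases he with rfl | rfl <;> simp_all)
    simp [critical] at hblock
  exact ⟨ht, by linarith⟩

end Contacts

section FullContact

variable {n : ℕ} {p : ℝ[X]} {E : Finset ℝ}

lemma natDegree_X_mul_derivative_sub_le (hp : p.natDegree ≤ n) :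
    (X * derivative p - n • p).natDegree ≤ n - 1 := by
  refine natDegree_le_iff_coeff_eq_zero.2 fun j hj ↦ ?_
  rw [coeff_sub, coeff_smul, mul_comm, nsmul_eq_mul]
  obtain rfl | hlt : n = j ∨ n < j := by lia
  · cases n with
    | zero => simp
    | succ m => rw [coeff_mul_X, coeff_derivative]; push_cast; ring
  · have hj0 : p.coeff j = 0 := coeff_eq_zero_of_natDegree_lt (hp.trans_lt hlt)
    obtain ⟨m, rfl⟩ : ∃ m, j = m + 1 := ⟨j - 1, by lia⟩
    rw [coeff_mul_X, coeff_derivative, hj0, zero_mul, mul_zero, sub_zero]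

lemma natDegree_pell_defect_le (hn : 1 ≤ n) (hp : p.natDegree ≤ n) :
    ((n : ℝ[X]) ^ 2 * (1 - p ^ 2) - (1 - X ^ 2) * derivative p ^ 2).natDegree ≤ 2 * n - 1 := by
  have split : (n : ℝ[X]) ^ 2 * (1 - p ^ 2) - (1 - X ^ 2) * derivative p ^ 2 =
      C ((n : ℝ) ^ 2) - derivative p ^ 2 +
        (X * derivative p - n • p) * (X * derivative p + n • p) := by
    simp only [nsmul_eq_mul, map_pow, map_natCast]
    ring
  have hp' := (natDegree_derivative_le p).trans (Nat.sub_le_sub_right hp 1)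
  have hadd : (X * derivative p + n • p).natDegree ≤ n :=
    natDegree_add_le_of_degree_le
      (natDegree_mul_le.trans (by rw [natDegree_X]; lia)) ((natDegree_smul_le _ _).trans hp)
  rw [split]
  exact natDegree_add_le_of_degree_le
    ((natDegree_sub_le_of_le (natDegree_C _).le (natDegree_pow_le_of_le 2 hp')).trans (by lia))
    ((natDegree_mul_le_of_le (natDegree_X_mul_derivative_sub_le hp) hadd).trans (by lia))

lemma nodal_mul_nodal_dvd {I : Finset ℝ} {f : ℝ[X]} (hI : I ⊆ E) (hE : ∀ t ∈ E, f.eval t = 0)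
    (hI' : ∀ t ∈ I, (derivative f).eval t = 0) :
    Lagrange.nodal E id * Lagrange.nodal I id ∣ f := by
  obtain ⟨g, rfl⟩ := nodal_dvd_of_forall_eval_eq_zero hE
  refine mul_dvd_mul_left _ (nodal_dvd_of_forall_eval_eq_zero fun t ht ↦ ?_)
  have simple : (derivative (Lagrange.nodal E id)).eval t ≠ 0 :=
    eval_derivative_nodal (hI ht) ▸ eval_nodal_erase_ne_zero E t
  have product_rule := hI' t ht
  rw [derivative_mul, eval_add, eval_mul, eval_mul, eval_nodal_eq_zero (hI ht), zero_mul,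
    add_zero] at product_rule
  exact (mul_eq_zero.1 product_rule).resolve_left simple

/-- The difference of the two sides has degree less than `2n`, yet it vanishes at all contact points
and to second order at the interior ones, which makes `2n` zeros. -/
lemma pell_equation_of_contacts (hn : 1 ≤ n) (hp : p ∈ unitPolys n)
    (hE : ∀ t ∈ E, IsContact p t) (hcard : n + 1 ≤ E.card) :
    (n : ℝ[X]) ^ 2 * (1 - p ^ 2) - (1 - X ^ 2) * derivative p ^ 2 = 0 := by
  set F := (n : ℝ[X]) ^ 2 * (1 - p ^ 2) - (1 - X ^ 2) * derivative p ^ 2 with hF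
  set I := E \ {-1, 1} with hI
  have critical : ∀ t ∈ I, (derivative p).eval t = 0 := fun t ht ↦ by
    simp only [hI, Finset.mem_sdiff, Finset.mem_insert, Finset.mem_singleton, not_or] at ht
    exact (hE t ht.1).eval_derivative_eq_zero hp ht.2.1 ht.2.2
  have zeros : ∀ t ∈ E, F.eval t = 0 := fun t ht ↦ by
    have contact : p.eval t ^ 2 = 1 := by rw [sq, (hE t ht).eval_mul_self]
    have edge : (1 - t ^ 2) * (derivative p).eval t ^ 2 = 0 := by
      by_cases ht' : t ∈ I
      · simp [critical t ht']
      · obtain rfl | rfl : t = -1 ∨ t = 1 := by simpa [hI, ht, or_iff_not_imp_left] using ht'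
        all_goals norm_num
    simp [hF, contact, edge]
  have double_zeros : ∀ t ∈ I, (derivative F).eval t = 0 := fun t ht ↦ by
    simp [hF, critical t ht, derivative_sq]
  have hdeg : F.natDegree ≤ 2 * n - 1 := natDegree_pell_defect_le hn hp.1
  by_contra hF0
  have hdvd := natDegree_le_of_dvd
    (nodal_mul_nodal_dvd Finset.sdiff_subset zeros double_zeros) hF0
  rw [Lagrange.nodal_monic.natDegree_mul Lagrange.nodal_monic, Lagrange.natDegree_nodal,
    Lagrange.natDegree_nodal] at hdvd
  have := card_le_card_sdiff_endpoints E
  lia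

/-- Differentiating Pell's equation at `1` shows that `p` attains the Markov bound
`|p'(1)| ≤ T_n'(1)`. -/
lemma eq_chebyshev_of_contacts (hn : 1 ≤ n) (hp : p ∈ unitPolys n) (hp' : derivative p ≠ 0)
    (hE : ∀ t ∈ E, IsContact p t) (hcard : n + 1 ≤ E.card) :
    p = Chebyshev.T ℝ n ∨ p = -Chebyshev.T ℝ n := by
  have pell := pell_equation_of_contacts hn hp hE hcard
  have ode : X * derivative p - (1 - X ^ 2) * derivative (derivative p) -
      (n : ℝ[X]) ^ 2 * p = 0 := by
    have := congr_arg derivative pell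
    simp only [derivative_sub, derivative_mul, derivative_sq, derivative_one, derivative_X,
      derivative_natCast, derivative_zero, C_ofNat] at this
    refine (mul_eq_zero.1 (?_ : 2 * derivative p * _ = 0)).resolve_left
      (mul_ne_zero two_ne_zero hp')
    linear_combination this
  have slope : (derivative p).eval 1 = n ^ 2 * p.eval 1 := by
    simpa [sub_eq_zero] using congr_arg (eval 1) ode
  have endpoint : p.eval 1 * p.eval 1 = 1 := by
    have := congr_arg (eval 1) pell
    have hn0 : n ≠ 0 := by lia
    simpa [hn0, sub_eq_zero, sq, eq_comm (b := (1 : ℝ))] using this.symm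
  have markov := (Chebyshev.eval_iterate_derivative_eq_iff_of_bounded (n := n)
    (P := p.eval 1 • p) one_pos hn le_rfl
    ((degree_smul_le _ _).trans (degree_le_of_natDegree_le hp.1))
    fun t ht ↦ by
      have abs_endpoint : |p.eval 1| = 1 := (abs_eq zero_le_one).2 (mul_self_eq_one_iff.1 endpoint)
      rw [eval_smul, smul_eq_mul, abs_mul, abs_endpoint, one_mul]
      exact hp.2 t ht).1 (by
        rw [Function.iterate_one, derivative_smul, eval_smul, slope, smul_eq_mul,
          mul_left_comm, endpoint, mul_one, Chebyshev.derivative_T_eval_one]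
        norm_cast)
  rcases mul_self_eq_one_iff.1 endpoint with h1 | h1 <;> rw [h1] at markov
  · exact .inl (by rw [← markov, one_smul])
  · exact .inr (by rw [← markov, neg_smul, one_smul, neg_neg])

end FullContact

section Chebyshev

variable {n k : ℕ}

lemma abs_derivAt_T_neg (x : ℝ) :
    |derivAt k (-x) (Chebyshev.T ℝ n)| = |derivAt k x (Chebyshev.T ℝ n)| := by
  set c : ℝ := (((n : ℤ).negOnePow : ℤ) : ℝ) with hc
  have parity : (Chebyshev.T ℝ n).comp (-X) = c • Chebyshev.T ℝ n :=
    Polynomial.funext fun r ↦ by simp [hc, Chebyshev.T_eval_neg]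
  have abs_c : |c| = 1 := by
    rw [hc, ← Int.cast_abs, Int.isUnit_iff_abs_eq.1 (Units.isUnit _), Int.cast_one]
  have := congr_arg abs (derivAt_comp_neg_X k x (Chebyshev.T ℝ n))
  simpa [parity, abs_mul, abs_c] using this.symm

lemma derivAt_T_pos (hk : 1 ≤ k) (hkn : k ≤ n) {x : ℝ} (hx : 1 ≤ x) :
    0 < derivAt k x (Chebyshev.T ℝ n) := by
  have zero_ne : (0 : ℝ[X]) ≠ Chebyshev.T ℝ n := fun h ↦ by
    simpa using congr_arg (eval 1) h
  have le := Chebyshev.eval_iterate_derivative_le_of_forall_abs_le_one (n := n) (P := 0) (k := k)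
    hx (by simp) (by simp)
  have ne := (Chebyshev.eval_iterate_derivative_eq_iff_of_bounded (n := n) (P := 0) hk hkn
    hx (by simp) (by simp)).not.2 zero_ne
  rw [iterate_derivative_zero, eval_zero, ← derivAt_apply] at le ne
  exact le.lt_of_ne ne

/-- Sonin's function: its derivative is `4 k z (T_n^{(k+1)})²`. -/
lemma monotoneOn_sonin :
    MonotoneOn (fun z ↦ ((n : ℝ) ^ 2 - k ^ 2) * derivAt k z (Chebyshev.T ℝ n) ^ 2 +
      (1 - z ^ 2) * derivAt (k + 1) z (Chebyshev.T ℝ n) ^ 2) (Ici 0) := by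
  set T := Chebyshev.T ℝ n
  have hder : ∀ z, HasDerivAt (fun z ↦ ((n : ℝ) ^ 2 - k ^ 2) * derivAt k z T ^ 2 +
      (1 - z ^ 2) * derivAt (k + 1) z T ^ 2) (4 * k * z * derivAt (k + 1) z T ^ 2) z := fun z ↦ by
    have ode := Chebyshev.one_sub_X_sq_mul_iterate_derivative_T_eval (R := ℝ) n k z
    simp only [← derivAt_apply, Int.cast_natCast] at ode
    refine ((((hasDerivAt_derivAt k z T).fun_pow 2).const_mul _).add
      (((hasDerivAt_pow 2 z).const_sub 1).mul
        ((hasDerivAt_derivAt (k + 1) z T).fun_pow 2))).congr_deriv ?_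
    simp only [Nat.add_one_sub_one, Nat.cast_ofNat, pow_one]
    linear_combination (2 * derivAt (k + 1) z T) * ode
  refine monotoneOn_of_hasDerivWithinAt_nonneg (convex_Ici 0)
    (fun z _ ↦ (hder z).continuousAt.continuousWithinAt)
    (fun z _ ↦ (hder z).hasDerivWithinAt) fun z hz ↦ ?_
  rw [interior_Ici] at hz
  have := (mem_Ioi.1 hz).le
  positivity

lemma abs_derivAt_T_le_of_stationary (hkn : k < n) {x y : ℝ} (hxy : |x| ≤ |y|)
    (hx : derivAt (k + 1) x (Chebyshev.T ℝ n) = 0) (hy : derivAt (k + 1) y (Chebyshev.T ℝ n) = 0) :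
    |derivAt k x (Chebyshev.T ℝ n)| ≤ |derivAt k y (Chebyshev.T ℝ n)| := by
  have abs_arg (j : ℕ) (z : ℝ) :
      |derivAt j |z| (Chebyshev.T ℝ n)| = |derivAt j z (Chebyshev.T ℝ n)| := by
    rcases abs_choice z with h | h <;> rw [h]
    exact abs_derivAt_T_neg z
  have stationary_abs {z : ℝ} (hz : derivAt (k + 1) z (Chebyshev.T ℝ n) = 0) :
      derivAt (k + 1) |z| (Chebyshev.T ℝ n) = 0 := by
    rw [← abs_eq_zero, abs_arg, hz, abs_zero]
  have sonin := monotoneOn_sonin (n := n) (k := k) (abs_nonneg x) (abs_nonneg y) hxy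
  simp only [stationary_abs hx, stationary_abs hy] at sonin
  have coeff_pos : (0 : ℝ) < (n : ℝ) ^ 2 - k ^ 2 := sub_pos.2 (by gcongr)
  rw [← abs_arg k x, ← abs_arg k y, ← sq_le_sq]
  exact le_of_mul_le_mul_left (by linarith) coeff_pos

lemma abs_le_of_isGreatest_zeros {ω x : ℝ}
    (hω : IsGreatest {y | derivAt k y (Chebyshev.T ℝ n) = 0} ω)
    (hx : derivAt k x (Chebyshev.T ℝ n) = 0) : |x| ≤ |ω| := by
  have stationary_neg : derivAt k (-x) (Chebyshev.T ℝ n) = 0 := by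
    rw [← abs_eq_zero, abs_derivAt_T_neg, hx, abs_zero]
  exact (abs_le'.2 ⟨hω.2 hx, hω.2 stationary_neg⟩).trans (le_abs_self ω)

lemma abs_lt_one_of_derivAt_T_eq_zero (hk : 1 ≤ k) (hkn : k ≤ n) {x : ℝ}
    (hx : derivAt k x (Chebyshev.T ℝ n) = 0) : |x| < 1 := by
  by_contra! h
  refine (derivAt_T_pos hk hkn h).ne' ?_
  rcases abs_choice x with hx' | hx' <;> rw [hx']
  · exact hx
  · rw [← abs_eq_zero, abs_derivAt_T_neg, hx, abs_zero]

lemma lt_of_derivAt_T_eq_zero (hk : 1 ≤ k) (hkn : k ≤ n) {x : ℝ}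
    (hx : derivAt k x (Chebyshev.T ℝ n) = 0) : k < n := by
  refine hkn.lt_of_ne ?_
  rintro rfl
  have hdeg : (derivative^[k] (Chebyshev.T ℝ k)).natDegree ≤ 0 := by
    simpa using natDegree_iterate_derivative (Chebyshev.T ℝ k) k
  have constant : derivAt k x (Chebyshev.T ℝ k) = derivAt k 1 (Chebyshev.T ℝ k) := by
    rw [derivAt_apply, derivAt_apply, eq_C_of_natDegree_le_zero hdeg, eval_C, eval_C]
  exact (derivAt_T_pos hk le_rfl le_rfl).ne' (constant ▸ hx)

end Chebyshev

section NodeWeights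

open Lagrange (nodal)

variable {E : Finset ℝ} {k : ℕ} {x t : ℝ}

lemma sum_derivAt_nodal_erase (E : Finset ℝ) (k : ℕ) (x : ℝ) :
    ∑ t ∈ E, derivAt k x (nodal (E.erase t) id) = derivAt (k + 1) x (nodal E id) := by
  rw [derivAt_succ, Lagrange.derivative_nodal, map_sum]

lemma derivAt_succ_nodal (ht : t ∈ E) :
    derivAt (k + 1) x (nodal E id) = (x - t) * derivAt (k + 1) x (nodal (E.erase t) id)
      + (k + 1) * derivAt k x (nodal (E.erase t) id) := by
  rw [Lagrange.nodal_eq_mul_nodal_erase ht, id, derivAt_X_sub_C_mul]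

lemma derivAt_nodal_erase_mul_pos (h0 : derivAt (k + 1) x (nodal E id) = 0)
    (hcard : k + 2 ≤ E.card) (ht : t ∈ E) :
    0 < derivAt (k + 1) x (nodal (E.erase t) id) * derivAt (k + 2) x (nodal E id) := by
  have laguerre := (hasSimpleRealRoots_nodal (E.erase t)).derivAt_mul_lt (k := k)
    (by rw [Lagrange.natDegree_nodal, Finset.card_erase_of_mem ht]; lia) x
  have first := derivAt_succ_nodal (k := k) (x := x) ht
  rw [h0] at first
  rw [derivAt_succ_nodal ht]
  set y₀ := derivAt k x (nodal (E.erase t) id)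
  set y₁ := derivAt (k + 1) x (nodal (E.erase t) id)
  set y₂ := derivAt (k + 2) x (nodal (E.erase t) id)
  calc 0 < (k + 1) * (y₁ ^ 2 - y₀ * y₂) + y₁ ^ 2 := by
        have := sub_pos.2 laguerre
        positivity
    _ = y₁ * ((x - t) * y₂ + ((k + 1 : ℕ) + 1) * y₁) := by
        push_cast
        linear_combination y₂ * first

/-- The weights `λ_t` of the interpolatory formula
`f^{(k)}(x) = ∑_{t ∈ E} (f(t) / ω'(t)) ω^{(k+1)}(x) λ_t` with nodes `E` and
`ω = ∏_{t ∈ E} (X - t)`. When `ω^{(k)}(x) = 0` they are the weights of a convex combination of the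
nodes with barycenter `x`. -/
noncomputable def nodeWeight (E : Finset ℝ) (k : ℕ) (x t : ℝ) : ℝ :=
  derivAt k x (nodal (E.erase t) id) / derivAt (k + 1) x (nodal E id)

lemma nodeWeight_pos (h0 : derivAt (k + 1) x (nodal E id) = 0) (hcard : k + 2 ≤ E.card)
    (ht : t ∈ E) : 0 < nodeWeight E (k + 1) x t :=
  div_pos_iff.2 (mul_pos_iff.1 (derivAt_nodal_erase_mul_pos h0 hcard ht))

lemma sum_nodeWeight (hW : derivAt (k + 1) x (nodal E id) ≠ 0) :
    ∑ t ∈ E, nodeWeight E k x t = 1 := by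
  simp only [nodeWeight]
  rw [← Finset.sum_div, sum_derivAt_nodal_erase, div_self hW]

lemma sum_sub_mul_nodeWeight (h0 : derivAt (k + 1) x (nodal E id) = 0) :
    ∑ t ∈ E, (t - x) * nodeWeight E (k + 1) x t = 0 := by
  have moment : ∀ t ∈ E, (t - x) * nodeWeight E (k + 1) x t
      = (k + 1) / derivAt (k + 2) x (nodal E id) * derivAt k x (nodal (E.erase t) id) :=
    fun t ht ↦ by
      have := derivAt_succ_nodal (k := k) (x := x) ht
      rw [nodeWeight, ← mul_div_assoc, div_mul_eq_mul_div]
      congr 1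
      linarith
  rw [Finset.sum_congr rfl moment, ← Finset.mul_sum, sum_derivAt_nodal_erase, h0, mul_zero]

lemma le_sum_mul_nodeWeight (h0 : derivAt (k + 1) x (nodal E id) = 0)
    (hW : derivAt (k + 2) x (nodal E id) ≠ 0) (hcard : k + 2 ≤ E.card) {f : ℝ → ℝ} {c d : ℝ}
    (hf : ∀ t ∈ E, c + d * (t - x) ≤ f t) : c ≤ ∑ t ∈ E, f t * nodeWeight E (k + 1) x t :=
  calc c = c * ∑ t ∈ E, nodeWeight E (k + 1) x t
        + d * ∑ t ∈ E, (t - x) * nodeWeight E (k + 1) x t := by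
        rw [sum_nodeWeight hW, sum_sub_mul_nodeWeight h0, mul_one, mul_zero, add_zero]
    _ = ∑ t ∈ E, (c + d * (t - x)) * nodeWeight E (k + 1) x t := by
        rw [Finset.mul_sum, Finset.mul_sum, ← Finset.sum_add_distrib]
        exact Finset.sum_congr rfl fun t _ ↦ by ring
    _ ≤ _ := Finset.sum_le_sum fun t ht ↦
        mul_le_mul_of_nonneg_right (hf t ht) (nodeWeight_pos h0 hcard ht).le

lemma exists_eval_eq_mul_eval_derivative (E : Finset ℝ) (k : ℕ) (x : ℝ) (g : ℝ → ℝ) :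
    ∃ u : ℝ[X], u.natDegree ≤ E.card
      ∧ (∀ t ∈ E, u.eval t
        = g t * (derivative ((derivAt (k + 1) x (nodal E id))⁻¹ • nodal E id)).eval t)
      ∧ derivAt k x u = ∑ t ∈ E, g t * nodeWeight E k x t := by
  set W := derivAt (k + 1) x (nodal E id) with hW
  refine ⟨∑ t ∈ E, (g t * W⁻¹) • nodal (E.erase t) id, ?_, fun t ht ↦ ?_, ?_⟩
  · refine natDegree_sum_le_of_forall_le _ _ fun t _ ↦ natDegree_smul_le_of_le ?_ _
    rw [Lagrange.natDegree_nodal]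
    exact Finset.card_erase_le
  · rw [eval_finsetSum, Finset.sum_eq_single_of_mem t ht fun s _ hst ↦ by
      simp [eval_nodal_eq_zero (Finset.mem_erase.2 ⟨hst.symm, ht⟩)], derivative_smul, eval_smul,
      eval_smul, eval_derivative_nodal ht, smul_eq_mul, smul_eq_mul, mul_assoc]
  · rw [map_sum]
    refine Finset.sum_congr rfl fun t _ ↦ ?_
    rw [map_smul, smul_eq_mul, nodeWeight, ← hW, div_eq_inv_mul, mul_assoc]

end NodeWeights

section ReparamField

open Filter Topology

variable {a b : ℝ} {p w : ℝ[X]} {t : ℝ}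

/-- The vector field `(t² - 1) / (b t + a)`. It vanishes at `±1`, so its flow for small times is a
reparametrisation of `[-1, 1]`. -/
noncomputable def reparamField (a b t : ℝ) : ℝ := (t ^ 2 - 1) / (b * t + a)

lemma continuousAt_reparamField (h : b * t + a ≠ 0) : ContinuousAt (reparamField a b) t := by
  unfold reparamField
  fun_prop (disch := exact h)

lemma exists_affine_le_reparamField (h : ∀ t ∈ Icc (-1 : ℝ) 1, 0 < b * t + a) {x : ℝ}
    (hx : x ∈ Icc (-1 : ℝ) 1) :
    ∃ d, ∀ t ∈ Icc (-1 : ℝ) 1, reparamField a b x + d * (t - x) ≤ reparamField a b t := by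
  refine ⟨(2 * x * (b * x + a) - (x ^ 2 - 1) * b) / (b * x + a) ^ 2, fun t ht ↦ ?_⟩
  have hmx := h x hx
  have hmt := h t ht
  have pos_right : 0 < b * 1 + a := h 1 (by simp)
  have pos_left : 0 < b * (-1) + a := h (-1) (by simp)
  have gap : reparamField a b t - (reparamField a b x
      + (2 * x * (b * x + a) - (x ^ 2 - 1) * b) / (b * x + a) ^ 2 * (t - x))
      = (t - x) ^ 2 * ((b * 1 + a) * (b * (-1) + a)) / ((b * t + a) * (b * x + a) ^ 2) := by
    have hDt : reparamField a b t * (b * t + a) = t ^ 2 - 1 := div_mul_cancel₀ _ hmt.ne'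
    have hDx : reparamField a b x * (b * x + a) = x ^ 2 - 1 := div_mul_cancel₀ _ hmx.ne'
    have hd := div_mul_cancel₀ (2 * x * (b * x + a) - (x ^ 2 - 1) * b) (pow_pos hmx 2).ne'
    rw [eq_div_iff (by positivity)]
    linear_combination (b * x + a) ^ 2 * hDt - (b * t + a) * (b * x + a) * hDx
      - (b * t + a) * (t - x) * hd
  have : 0 ≤ (t - x) ^ 2 * ((b * 1 + a) * (b * (-1) + a)) / ((b * t + a) * (b * x + a) ^ 2) := by
    positivity
  linarith

lemma eventually_add_mul_reparamField_mem_Icc (h : ∀ t ∈ Icc (-1 : ℝ) 1, 0 < b * t + a) :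
    ∀ᶠ s in 𝓝[>] (0 : ℝ), ∀ t ∈ Icc (-1 : ℝ) 1, t + s * reparamField a b t ∈ Icc (-1 : ℝ) 1 := by
  have pos_right : 0 < b * 1 + a := h 1 (by simp)
  have pos_left : 0 < b * (-1) + a := h (-1) (by simp)
  filter_upwards [Ioo_mem_nhdsGT (half_pos pos_left)] with s hs t ht
  have hm := h t ht
  have left : 0 ≤ 1 - s * (1 - t) / (b * t + a) := by
    rw [sub_nonneg, div_le_one hm]
    nlinarith [mul_nonneg (sub_nonneg.2 hs.2.le) (sub_nonneg.2 ht.2),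
      mul_nonneg pos_right.le (neg_le_iff_add_nonneg'.1 ht.1)]
  have right : 0 ≤ 1 + s * (1 + t) / (b * t + a) := by
    have := hs.1
    have := neg_le_iff_add_nonneg'.1 ht.1
    positivity
  have eq_left : t + s * reparamField a b t = -1 + (1 + t) * (1 - s * (1 - t) / (b * t + a)) := by
    unfold reparamField
    field_simp
    ring
  have eq_right : t + s * reparamField a b t = 1 - (1 - t) * (1 + s * (1 + t) / (b * t + a)) := by
    unfold reparamField
    field_simp
    ring
  constructor
  · rw [eq_left]
    exact le_add_of_nonneg_right (mul_nonneg (neg_le_iff_add_nonneg'.1 ht.1) left)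
  · rw [eq_right]
    exact sub_le_self _ (mul_nonneg (sub_nonneg.2 ht.2) right)

lemma eval_eq_reparamField_mul (hfac : (X ^ 2 - 1) * derivative p = (C b * X + C a) * w)
    (h : b * t + a ≠ 0) : w.eval t = reparamField a b t * (derivative p).eval t := by
  have := congr_arg (eval t) hfac
  simp only [eval_mul, eval_sub, eval_add, eval_pow, eval_X, eval_C, eval_one] at this
  rw [reparamField, div_mul_eq_mul_div, this, mul_div_cancel_left₀ _ h]

lemma eval_derivative_factorization (hfac : (X ^ 2 - 1) * derivative p = (C b * X + C a) * w)
    (hw : w.eval t = 0) :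
    2 * t * (derivative p).eval t + (t ^ 2 - 1) * (derivative (derivative p)).eval t
      = (b * t + a) * (derivative w).eval t := by
  have := congr_arg (fun f ↦ (derivative f).eval t) hfac
  simpa [hw, one_add_one_eq_two] using this

lemma reparamField_sq_mul (hfac : (X ^ 2 - 1) * derivative p = (C b * X + C a) * w)
    (h : b * t + a ≠ 0) (hw : w.eval t = 0) :
    reparamField a b t ^ 2 * (derivative (derivative p)).eval t
      = reparamField a b t * (derivative w).eval t := by
  have zero := eval_eq_reparamField_mul hfac h
  rw [hw] at zero
  have key := eval_derivative_factorization hfac hw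
  have hD : t ^ 2 - 1 = reparamField a b t * (b * t + a) := (div_mul_cancel₀ _ h).symm
  rw [hD] at key
  refine mul_left_cancel₀ h ?_
  linear_combination reparamField a b t * key + 2 * t * zero

end ReparamField

section SecondVariation

open Filter Topology

variable {n k : ℕ} {p w u : ℝ[X]} {x₀ : ℝ} {D : ℝ → ℝ}

lemma eventually_lt_derivAt_add {ν : ℝ} (hp : derivAt (k + 1) x₀ p = 0) (hw : derivAt k x₀ w = 0)
    (gain : 0 < ν ^ 2 / 2 * derivAt (k + 2) x₀ p + ν * derivAt (k + 1) x₀ w + derivAt k x₀ u) :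
    ∀ᶠ s in 𝓝[>] (0 : ℝ),
      derivAt k x₀ p < derivAt k (x₀ + s * ν) (p + s • w + s ^ 2 • u) := by
  obtain ⟨R, hR, taylorp⟩ := exists_derivAt_taylor k p
  obtain ⟨S, hS, taylorw⟩ := exists_derivAt_taylor k w
  let B : ℝ → ℝ := fun s ↦ ν ^ 2 / 2 * derivAt (k + 2) x₀ p + s * ν ^ 3 * R (x₀, s * ν)
    + (ν * derivAt (k + 1) x₀ w + s * ν ^ 2 / 2 * derivAt (k + 2) x₀ w
      + s ^ 2 * ν ^ 3 * S (x₀, s * ν)) + derivAt k (x₀ + s * ν) u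
  have hB : ∀ᶠ s in 𝓝 (0 : ℝ), 0 < B s := by
    have hu := continuous_derivAt k u
    have cont : Continuous B := by fun_prop
    exact (cont.tendsto' 0 _ rfl).eventually_const_lt (by simpa [B] using gain)
  filter_upwards [nhdsWithin_le_nhds hB, self_mem_nhdsWithin] with s hBs hs
  have expand : derivAt k (x₀ + s * ν) (p + s • w + s ^ 2 • u) = derivAt k x₀ p + s ^ 2 * B s := by
    simp only [map_add, map_smul, smul_eq_mul, taylorp, taylorw, hp, hw, B]
    ring
  rw [expand]
  exact lt_add_of_pos_right _ (mul_pos (pow_pos hs 2) hBs)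

namespace IsInteriorSchurMax

/-- The curve `p + s w + s² u` agrees with `p(t + s D(t))` to second order at the contact points, so
it stays in `unitPolys n`; by maximality its `k`-th derivative cannot grow at `x₀ + s ν`, and the
best choice of `ν` gives the bound. -/
lemma second_variation (h : IsInteriorSchurMax n k p x₀) (hwn : w.natDegree ≤ n)
    (hun : u.natDegree ≤ n) (hD : ∀ t ∈ Icc (-1 : ℝ) 1, ContinuousAt D t)
    (hw : ∀ t ∈ Icc (-1 : ℝ) 1, w.eval t = D t * (derivative p).eval t)
    (hflow : ∀ᶠ s in 𝓝[>] (0 : ℝ), ∀ t ∈ Icc (-1 : ℝ) 1, t + s * D t ∈ Icc (-1 : ℝ) 1)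
    (hu : ∀ t, IsContact p t →
      p.eval t * (u.eval t - D t ^ 2 / 2 * (derivative (derivative p)).eval t) ≤ 0)
    (hw0 : derivAt k x₀ w = 0) :
    derivAt k x₀ u ≤ derivAt (k + 1) x₀ w ^ 2 / (2 * derivAt (k + 2) x₀ p) := by
  by_contra! hlt
  obtain ⟨η, hη, hηM⟩ := exists_pos_mul_lt (sub_pos.2 hlt) (derivAt k x₀ p)
  have strict : ∀ t, IsContact p t →
      p.eval t * ((u - η • p).eval t - D t ^ 2 / 2 * (derivative (derivative p)).eval t) < 0 :=
    fun t ht ↦ by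
      rw [eval_sub, eval_smul, smul_eq_mul]
      linarith [hu t ht, congr_arg (η * ·) ht.eval_mul_self]
  have mem : ∀ᶠ s in 𝓝[>] (0 : ℝ), p + s • w + s ^ 2 • (u - η • p) ∈ unitPolys n := by
    filter_upwards [eventually_abs_eval_add_smul_add_sq_smul_le_one h.mem.2 hD hw hflow strict]
      with s hs
    have hdeg : (u - η • p).natDegree ≤ n :=
      (natDegree_sub_le_of_le hun (natDegree_smul_le_of_le h.mem.1 η)).trans (max_self n).le
    exact ⟨natDegree_add_le_of_degree_le (natDegree_add_le_of_degree_le h.mem.1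
      (natDegree_smul_le_of_le hwn s)) (natDegree_smul_le_of_le hdeg _), hs⟩
  have lim : ∀ y, Tendsto (fun s : ℝ ↦ derivAt k y (p + s • w + s ^ 2 • (u - η • p))) (𝓝[>] 0)
      (𝓝 (derivAt k y p)) := fun y ↦ by
    simp only [map_add, map_smul, smul_eq_mul]
    exact (Continuous.tendsto' (by fun_prop) _ _ (by simp)).mono_left nhdsWithin_le_nhds
  set ν := -(derivAt (k + 1) x₀ w / derivAt (k + 2) x₀ p) with hν
  have upper := h.eventually_derivAt_le mem lim (x := fun s ↦ x₀ + s * ν)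
    ((Continuous.tendsto' (by fun_prop) _ _ (by simp)).mono_left nhdsWithin_le_nhds)
  have gain : 0 < ν ^ 2 / 2 * derivAt (k + 2) x₀ p + ν * derivAt (k + 1) x₀ w
      + derivAt k x₀ (u - η • p) := by
    have := h.concave.ne
    have optimal : ν ^ 2 / 2 * derivAt (k + 2) x₀ p + ν * derivAt (k + 1) x₀ w
        = -(derivAt (k + 1) x₀ w ^ 2 / (2 * derivAt (k + 2) x₀ p)) := by
      rw [hν]
      field_simp
      ring
    rw [optimal, map_sub, map_smul, smul_eq_mul]
    linarith
  obtain ⟨s, hle, hgt⟩ := (upper.and (eventually_lt_derivAt_add h.stationary hw0 gain)).exists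
  exact hgt.not_ge hle

end IsInteriorSchurMax

end SecondVariation

section ExactlyNContacts

open Lagrange (nodal)

variable {n k : ℕ} {p w : ℝ[X]} {x₀ a b t : ℝ} {E : Finset ℝ}

lemma exists_affine_factor (hp : p ∈ unitPolys n) (hp' : derivative p ≠ 0)
    (hE : ∀ t ∈ E, IsContact p t) (hcard : E.card = n) :
    ∃ a b : ℝ, (X ^ 2 - 1) * derivative p = (C b * X + C a) * nodal E id := by
  obtain ⟨g, hg⟩ : nodal E id ∣ (X ^ 2 - 1) * derivative p :=
    nodal_dvd_of_forall_eval_eq_zero fun t ht ↦ by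
      by_cases hl : t = -1
      · simp [hl]
      by_cases hr : t = 1
      · simp [hr]
      simp [(hE t ht).eval_derivative_eq_zero hp hl hr]
  have hquad : (X ^ 2 - 1 : ℝ[X]) ≠ 0 := (monic_X_pow_sub_C 1 two_ne_zero).ne_zero
  have hg0 : g ≠ 0 := by
    rintro rfl
    exact mul_ne_zero hquad hp' (by rw [hg, mul_zero])
  have hdeg := congr_arg natDegree hg
  have hquad_deg : (X ^ 2 - 1 : ℝ[X]).natDegree = 2 := natDegree_X_pow_sub_C (r := (1 : ℝ))
  rw [natDegree_mul hquad hp', hquad_deg, Lagrange.nodal_monic.natDegree_mul' hg0,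
    Lagrange.natDegree_nodal, hcard] at hdeg
  have hlt := natDegree_derivative_lt (p := p) fun h0 ↦ hp' (derivative_of_natDegree_zero h0)
  have hpn := hp.1
  obtain ⟨b, a, rfl⟩ := exists_eq_X_add_C_of_natDegree_le_one (p := g) (by lia)
  exact ⟨a, b, by rw [hg, mul_comm]⟩

namespace IsInteriorSchurMax

lemma derivAt_nodal_eq_zero (h : IsInteriorSchurMax n k p x₀)
    (hE : ∀ t, IsContact p t → t ∈ E) (hcard : E.card ≤ n) : derivAt k x₀ (nodal E id) = 0 :=
  h.derivAt_eq_zero (by rwa [Lagrange.natDegree_nodal])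
    fun t ht ↦ eval_nodal_eq_zero (hE t ht)

lemma affine_mul_derivAt (h : IsInteriorSchurMax n k p x₀) (hk : 1 ≤ k)
    (hfac : (X ^ 2 - 1) * derivative p = (C b * X + C a) * w) (hw : derivAt k x₀ w = 0) :
    (b * x₀ + a) * derivAt (k + 1) x₀ w
      = (x₀ ^ 2 - 1) * derivAt (k + 2) x₀ p + k * (k + 1) * derivAt k x₀ p := by
  obtain ⟨j, rfl⟩ := Nat.exists_eq_add_of_le' hk
  have := congr_arg (derivAt (j + 2) x₀) hfac
  rw [derivAt_X_sq_sub_one_mul, derivAt_linear_mul, hw, ← derivAt_succ, ← derivAt_succ,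
    ← derivAt_succ, h.stationary] at this
  push_cast at this ⊢
  linarith

lemma affine_mul_derivAt_pos (h : IsInteriorSchurMax n k p x₀) (hk : 1 ≤ k)
    (hfac : (X ^ 2 - 1) * derivative p = (C b * X + C a) * w) (hw : derivAt k x₀ w = 0) :
    0 < (b * x₀ + a) * derivAt (k + 1) x₀ w := by
  have hquad : x₀ ^ 2 - 1 < 0 := by nlinarith [h.interior.1, h.interior.2]
  have hpos := h.pos
  rw [h.affine_mul_derivAt hk hfac hw]
  exact add_pos_of_pos_of_nonneg (mul_pos_of_neg_of_neg hquad h.concave) (by positivity)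

/-- Moving `p` inwards at a single contact point must not increase `p^{(k+1)}(x₀)`. -/
lemma eval_mul_eval_derivative_nodal_pos (h : IsInteriorSchurMax n (k + 1) p x₀)
    (hkn : k + 3 ≤ n) (hE : ∀ t, t ∈ E ↔ IsContact p t) (hcard : E.card = n) (ht : t ∈ E) :
    0 < p.eval t * (derivative (nodal E id)).eval t * derivAt (k + 2) x₀ (nodal E id) := by
  have h0 := h.derivAt_nodal_eq_zero (fun t ↦ (hE t).2) hcard.le
  have weight := derivAt_nodal_erase_mul_pos h0 (by lia) ht
  set y := (derivative (nodal E id)).eval t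
  have hy : y = (nodal (E.erase t) id).eval t := eval_derivative_nodal ht
  have hpy : p.eval t * y ≠ 0 := by
    refine mul_ne_zero (left_ne_zero_of_mul_eq_one ((hE t).1 ht).eval_mul_self) ?_
    exact hy ▸ eval_nodal_erase_ne_zero E t
  have first_order := h.derivAt_nonpos (r := -(p.eval t * y) • nodal (E.erase t) id)
    (natDegree_smul_le_of_le (by rw [Lagrange.natDegree_nodal, Finset.card_erase_of_mem ht]; lia) _)
    (fun s hs ↦ by
      rw [eval_smul, smul_eq_mul]
      by_cases hst : s = t
      · rw [hst, ← hy]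
        nlinarith [sq_nonneg (p.eval t * y)]
      · simp [eval_nodal_eq_zero (Finset.mem_erase.2 ⟨hst, (hE s).2 hs⟩)])
  rw [map_smul, smul_eq_mul] at first_order
  set z := derivAt (k + 1) x₀ (nodal (E.erase t) id)
  set W := derivAt (k + 2) x₀ (nodal E id)
  have hz : z ≠ 0 := left_ne_zero_of_mul weight.ne'
  have hpyz : 0 < p.eval t * y * z :=
    (by linarith : 0 ≤ p.eval t * y * z).lt_of_ne' (mul_ne_zero hpy hz)
  refine (mul_pos_iff_of_pos_left (sq_pos_of_ne_zero hz)).1 ?_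
  linarith [mul_pos hpyz weight]

lemma affine_endpoint_mul_pos (h : IsInteriorSchurMax n (k + 1) p x₀) (hkn : k + 3 ≤ n)
    (hE : ∀ t, t ∈ E ↔ IsContact p t) (hcard : E.card = n)
    (hfac : (X ^ 2 - 1) * derivative p = (C b * X + C a) * nodal E id) {e : ℝ}
    (he : e = 1 ∨ e = -1) : 0 < (b * e + a) * derivAt (k + 2) x₀ (nodal E id) := by
  obtain ⟨contact, slope⟩ := h.isContact_endpoint le_add_self he
  have sign := h.eval_mul_eval_derivative_nodal_pos hkn hE hcard ((hE e).2 contact)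
  have hsq : e ^ 2 - 1 = 0 := by rcases he with rfl | rfl <;> norm_num
  have relation := eval_derivative_factorization hfac
    (eval_nodal_eq_zero ((hE e).2 contact))
  rw [hsq, zero_mul, add_zero] at relation
  have hne := left_ne_zero_of_mul sign.ne'
  refine (mul_pos_iff_of_pos_left (sq_pos_of_ne_zero hne)).1 ?_
  calc 0 < 2 * (p.eval e * (e * (derivative p).eval e)) * (p.eval e *
        (derivative (nodal E id)).eval e * derivAt (k + 2) x₀ (nodal E id)) :=
        mul_pos (mul_pos two_pos slope) sign
    _ = _ := by
        linear_combination p.eval e ^ 2 * (derivative (nodal E id)).eval e *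
          derivAt (k + 2) x₀ (nodal E id) * relation

lemma exists_pos_affine_factor (h : IsInteriorSchurMax n (k + 1) p x₀) (hkn : k + 3 ≤ n)
    (hE : ∀ t, t ∈ E ↔ IsContact p t) (hcard : E.card = n)
    (hW : derivAt (k + 2) x₀ (nodal E id) ≠ 0) :
    ∃ a b : ℝ, (∀ t ∈ Icc (-1 : ℝ) 1, 0 < b * t + a) ∧ (X ^ 2 - 1) * derivative p
      = (C b * X + C a) * ((derivAt (k + 2) x₀ (nodal E id))⁻¹ • nodal E id) := by
  obtain ⟨a, b, hfac⟩ := exists_affine_factor h.mem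
    (h.derivative_ne_zero le_add_self (by lia)) (fun t ↦ (hE t).1) hcard
  have right := h.affine_endpoint_mul_pos hkn hE hcard hfac (.inl rfl)
  have left := h.affine_endpoint_mul_pos hkn hE hcard hfac (.inr rfl)
  set W := derivAt (k + 2) x₀ (nodal E id)
  refine ⟨W * a, W * b, fun t ht ↦ ?_, ?_⟩
  · rcases le_total t 0 with ht0 | ht0
    · nlinarith [mul_nonneg left.le (neg_nonneg.2 ht0), ht.1]
    · nlinarith [mul_nonneg right.le ht0, ht.2]
  · have unit : C W * C W⁻¹ = (1 : ℝ[X]) := by rw [← C_mul, mul_inv_cancel₀ hW, C_1]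
    rw [hfac, smul_eq_C_mul, C_mul, C_mul]
    linear_combination -((C b * X + C a) * nodal E id) * unit

lemma inv_lt_reparamField (h : IsInteriorSchurMax n k p x₀) (hk : 1 ≤ k)
    (hfac : (X ^ 2 - 1) * derivative p = (C b * X + C a) * w) (hpos : 0 < b * x₀ + a)
    (hw0 : derivAt k x₀ w = 0) (hw1 : derivAt (k + 1) x₀ w = 1) :
    (derivAt (k + 2) x₀ p)⁻¹ < reparamField a b x₀ := by
  have identity := h.affine_mul_derivAt hk hfac hw0
  have gain : 0 < k * (k + 1) * derivAt k x₀ p := by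
    have := h.pos
    positivity
  rw [hw1, mul_one] at identity
  rw [reparamField, ← mul_lt_mul_right_of_neg h.concave, inv_mul_cancel₀ h.concave.ne,
    div_mul_eq_mul_div, div_lt_one hpos]
  linarith

/-- The second variation along `reparamField a b` is at least `reparamField a b x₀ / 2` by
convexity, hence larger than the upper bound `1 / (2 p^{(k+3)}(x₀))` given by maximality. -/
lemma card_contacts_ne (h : IsInteriorSchurMax n (k + 1) p x₀) (hkn : k + 3 ≤ n)
    (hE : ∀ t, t ∈ E ↔ IsContact p t) : E.card ≠ n := by
  intro hcard
  have h0 := h.derivAt_nodal_eq_zero (fun t ↦ (hE t).2) hcard.le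
  obtain ⟨_, _, hfac₀⟩ := exists_affine_factor h.mem
    (h.derivative_ne_zero le_add_self (by lia)) (fun t ↦ (hE t).1) hcard
  have hW := right_ne_zero_of_mul (h.affine_mul_derivAt_pos le_add_self hfac₀ h0).ne'
  obtain ⟨a, b, hpos, hfac⟩ := h.exists_pos_affine_factor hkn hE hcard hW
  set w := (derivAt (k + 2) x₀ (nodal E id))⁻¹ • nodal E id with hw
  have hw0 : derivAt (k + 1) x₀ w = 0 := by rw [map_smul, h0, smul_zero]
  have hw1 : derivAt (k + 2) x₀ w = 1 := by rw [map_smul, smul_eq_mul, inv_mul_cancel₀ hW]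
  obtain ⟨u, hun, hu, hvalue⟩ := exists_eval_eq_mul_eval_derivative E (k + 1) x₀
    fun t ↦ reparamField a b t / 2
  have contact : ∀ t, IsContact p t → u.eval t
      = reparamField a b t ^ 2 / 2 * (derivative (derivative p)).eval t := fun t ht ↦ by
    have hwt : w.eval t = 0 := by simp [hw, eval_nodal_eq_zero ((hE t).2 ht)]
    rw [hu t ((hE t).2 ht), div_mul_eq_mul_div, div_mul_eq_mul_div,
      reparamField_sq_mul hfac (hpos t ht.1).ne' hwt]
  have upper := h.second_variation (w := w) (D := reparamField a b)
    (natDegree_smul_le_of_le (by rw [Lagrange.natDegree_nodal, hcard]) _) (hun.trans hcard.le)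
    (fun t ht ↦ continuousAt_reparamField (hpos t ht).ne')
    (fun t ht ↦ eval_eq_reparamField_mul hfac (hpos t ht).ne')
    (eventually_add_mul_reparamField_mem_Icc hpos)
    (fun t ht ↦ by rw [contact t ht, sub_self, mul_zero]) hw0
  obtain ⟨d, hd⟩ := exists_affine_le_reparamField hpos h.point_mem
  have lower : reparamField a b x₀ / 2 ≤ derivAt (k + 1) x₀ u :=
    hvalue ▸ le_sum_mul_nodeWeight h0 hW (by lia) (d := d / 2)
      fun t ht ↦ by linarith [hd t ((hE t).1 ht).1]
  have gain := h.inv_lt_reparamField le_add_self hfac (hpos x₀ h.point_mem) hw0 hw1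
  rw [hw1, one_pow, one_div, mul_inv] at upper
  linarith

end IsInteriorSchurMax

end ExactlyNContacts

section Existence

lemma zero_mem_unitPolys (n : ℕ) : (0 : ℝ[X]) ∈ unitPolys n := by
  simp [unitPolys]

lemma neg_mem_unitPolys {n : ℕ} {q : ℝ[X]} (hq : q ∈ unitPolys n) : -q ∈ unitPolys n := by
  simpa [unitPolys] using hq

lemma comp_neg_X_mem_unitPolys {n : ℕ} {q : ℝ[X]} (hq : q ∈ unitPolys n) :
    q.comp (-X) ∈ unitPolys n := by
  refine ⟨natDegree_comp_le.trans (by simpa using hq.1), fun t ht ↦ ?_⟩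
  simpa using hq.2 (-t) ⟨neg_le_neg ht.2, neg_le.1 ht.1⟩

lemma T_mem_unitPolys (n : ℕ) : Chebyshev.T ℝ n ∈ unitPolys n :=
  ⟨by simp [Chebyshev.natDegree_T],
    fun _ ht ↦ Chebyshev.abs_eval_T_real_le_one n (abs_le.2 ht)⟩

lemma exists_injective_mem_Icc (n : ℕ) :
    ∃ v : Fin n → ℝ, Function.Injective v ∧ ∀ i, v i ∈ Icc (-1 : ℝ) 1 := by
  have infinite : (Icc (-1 : ℝ) 1).Infinite := Icc_infinite (by norm_num)
  exact ⟨fun i ↦ infinite.natEmbedding _ i, Subtype.val_injective.comp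
    ((infinite.natEmbedding _).injective.comp Fin.val_injective), fun i ↦ Subtype.prop _⟩

section Interpolation

variable {n : ℕ} {v : Fin (n + 1) → ℝ}

lemma natDegree_interpolate_le (hv : Function.Injective v) (a : Fin (n + 1) → ℝ) :
    (Lagrange.interpolate Finset.univ v a).natDegree ≤ n := by
  have degree_lt := Lagrange.degree_interpolate_lt (s := Finset.univ) a hv.injOn
  rw [Finset.card_univ, Fintype.card_fin] at degree_lt
  exact natDegree_le_of_degree_le (Order.lt_succ_iff.1 degree_lt)

lemma interpolate_eval_eq (hv : Function.Injective v) {q : ℝ[X]} (hq : q.natDegree ≤ n) :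
    Lagrange.interpolate Finset.univ v (fun i ↦ q.eval (v i)) = q := by
  refine (Lagrange.eq_interpolate hv.injOn ?_).symm
  rw [Finset.card_univ, Fintype.card_fin]
  exact degree_le_natDegree.trans_lt (by exact_mod_cast Nat.lt_succ_of_le hq)

lemma continuous_derivAt_interpolate (v : Fin (n + 1) → ℝ) (k : ℕ) :
    Continuous fun z : (Fin (n + 1) → ℝ) × ℝ ↦
      derivAt k z.2 (Lagrange.interpolate Finset.univ v z.1) := by
  simp only [Lagrange.interpolate_apply, ← smul_eq_C_mul, map_sum, map_smul, smul_eq_mul]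
  refine continuous_finsetSum _ fun i _ ↦ ?_
  exact ((continuous_apply i).comp continuous_fst).mul
    ((continuous_derivAt k _).comp continuous_snd)

/-- The pairs of a polynomial in `unitPolys n` and a point of `[-1, 1]` at which its
`(k + 1)`-st derivative vanishes. Polynomials are encoded by their values at the nodes `v`, so
that compactness can be taken in a finite-dimensional space. -/
def stationaryPairs (v : Fin (n + 1) → ℝ) (k : ℕ) : Set ((Fin (n + 1) → ℝ) × ℝ) :=
  {z | z ∈ (univ.pi fun _ ↦ Icc (-1 : ℝ) 1) ×ˢ Icc (-1 : ℝ) 1 ∧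
    (∀ t ∈ Icc (-1 : ℝ) 1, |(Lagrange.interpolate Finset.univ v z.1).eval t| ≤ 1) ∧
    derivAt (k + 1) z.2 (Lagrange.interpolate Finset.univ v z.1) = 0}

lemma isCompact_stationaryPairs (v : Fin (n + 1) → ℝ) (k : ℕ) :
    IsCompact (stationaryPairs v k) := by
  have bounded (t : ℝ) : IsClosed {z : (Fin (n + 1) → ℝ) × ℝ |
      |(Lagrange.interpolate Finset.univ v z.1).eval t| ≤ 1} := by
    simp only [← derivAt_zero]
    exact isClosed_le ((continuous_derivAt_interpolate v 0).comp
      (continuous_fst.prodMk continuous_const)).abs continuous_const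
  have all_bounded : IsClosed {z : (Fin (n + 1) → ℝ) × ℝ | ∀ t ∈ Icc (-1 : ℝ) 1,
      |(Lagrange.interpolate Finset.univ v z.1).eval t| ≤ 1} := by
    simpa only [ofPred_forall] using isClosed_biInter fun t (_ : t ∈ Icc (-1 : ℝ) 1) ↦ bounded t
  exact ((isCompact_univ_pi fun _ ↦ isCompact_Icc).prod isCompact_Icc).inter_right
    (all_bounded.inter
      (isClosed_eq (continuous_derivAt_interpolate v (k + 1)) continuous_const))

lemma mem_stationaryPairs (hv : Function.Injective v) (hvI : ∀ i, v i ∈ Icc (-1 : ℝ) 1) {k : ℕ}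
    {q : ℝ[X]} {y : ℝ} (hq : q ∈ unitPolys n) (hy : y ∈ Icc (-1 : ℝ) 1)
    (hqy : derivAt (k + 1) y q = 0) : (fun i ↦ q.eval (v i), y) ∈ stationaryPairs v k := by
  refine ⟨⟨fun i _ ↦ abs_le.1 (hq.2 _ (hvI i)), hy⟩, ?_, ?_⟩ <;>
    simp only [interpolate_eval_eq hv hq.1]
  exacts [hq.2, hqy]

end Interpolation

lemma exists_isSchurMax (n k : ℕ) : ∃ p x₀, IsSchurMax n k p x₀ := by
  obtain ⟨v, hv, hvI⟩ := exists_injective_mem_Icc (n + 1)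
  have nonempty : (stationaryPairs v k).Nonempty :=
    ⟨_, mem_stationaryPairs hv hvI (zero_mem_unitPolys n) (y := 0) (by norm_num) (map_zero _)⟩
  obtain ⟨⟨a, x₀⟩, ⟨⟨-, hx₀⟩, bounded, stationary⟩, maximal⟩ :=
    (isCompact_stationaryPairs v k).exists_isMaxOn nonempty
      (continuous_derivAt_interpolate v k).continuousOn
  refine ⟨_, x₀, ⟨natDegree_interpolate_le hv a, bounded⟩, hx₀, stationary, fun q hq y hy hqy ↦ ?_⟩
  simpa only [mem_ofPred_eq, interpolate_eval_eq hv hq.1] using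
    maximal (mem_stationaryPairs hv hvI hq hy hqy)

end Existence

section SchurConstant

variable {n k : ℕ} {p : ℝ[X]} {x₀ : ℝ}

namespace IsSchurMax

lemma abs_derivAt_le (h : IsSchurMax n k p x₀) {q : ℝ[X]} (hq : q ∈ unitPolys n) {y : ℝ}
    (hy : y ∈ Icc (-1 : ℝ) 1) (hqy : derivAt (k + 1) y q = 0) :
    |derivAt k y q| ≤ derivAt k x₀ p := by
  have upper_neg := h.derivAt_le (-q) (neg_mem_unitPolys hq) y hy (by rw [map_neg, hqy, neg_zero])
  rw [map_neg] at upper_neg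
  exact abs_le'.2 ⟨h.derivAt_le q hq y hy hqy, upper_neg⟩

lemma mukStar_le (h : IsSchurMax n k p x₀) {x : ℝ} (hx : x ∈ Icc (-1 : ℝ) 1) :
    mukStar n k x ≤ derivAt k x₀ p := by
  refine csSup_le ⟨0, 0, by simp, by simp, by simp, by simp⟩ ?_
  rintro _ ⟨q, hdeg, hle, hqx, rfl⟩
  rw [← derivAt_apply] at hqx ⊢
  exact h.abs_derivAt_le ⟨hdeg, hle⟩ hx hqx

end IsSchurMax

lemma abs_derivAt_le_mukStar {x : ℝ} (hx : x ∈ Icc (-1 : ℝ) 1) {q : ℝ[X]} (hq : q ∈ unitPolys n)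
    (hqx : derivAt (k + 1) x q = 0) : |derivAt k x q| ≤ mukStar n k x := by
  obtain ⟨p, x₀, h⟩ := exists_isSchurMax n k
  refine le_csSup ⟨derivAt k x₀ p, ?_⟩ ⟨q, hq.1, hq.2, by rwa [← derivAt_apply], by
    rw [derivAt_apply]⟩
  rintro _ ⟨r, hdeg, hle, hrx, rfl⟩
  rw [← derivAt_apply] at hrx ⊢
  exact h.abs_derivAt_le ⟨hdeg, hle⟩ hx hrx

namespace IsSchurMax

lemma sSup_mukStar (h : IsSchurMax n k p x₀) :
    sSup {y | ∃ x ∈ Icc (-1 : ℝ) 1, y = mukStar n k x} = derivAt k x₀ p := by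
  refine IsGreatest.csSup_eq ⟨⟨x₀, h.point_mem, ?_⟩, ?_⟩
  · exact le_antisymm ((le_abs_self _).trans
      (abs_derivAt_le_mukStar h.point_mem h.mem h.stationary)) (h.mukStar_le h.point_mem)
  · rintro _ ⟨x, hx, rfl⟩
    exact h.mukStar_le hx

lemma le_mukStar_one (h : IsSchurMax n k p x₀) (hx₀ : |x₀| = 1) :
    derivAt k x₀ p ≤ mukStar n k 1 := by
  have one_mem : (1 : ℝ) ∈ Icc (-1 : ℝ) 1 := by norm_num
  rcases eq_or_eq_neg_of_abs_eq hx₀ with rfl | rfl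
  · exact (le_abs_self _).trans (abs_derivAt_le_mukStar one_mem h.mem h.stationary)
  · have reflected := abs_derivAt_le_mukStar (k := k) one_mem (comp_neg_X_mem_unitPolys h.mem)
      (by rw [derivAt_comp_neg_X, h.stationary, mul_zero])
    rw [derivAt_comp_neg_X, abs_mul, abs_neg_one_pow, one_mul] at reflected
    exact (le_abs_self _).trans reflected

lemma eq_chebyshev (h : IsSchurMax n k p x₀) (hk : 1 ≤ k) (hkn : k + 2 ≤ n)
    (hx₀ : x₀ ∈ Ioo (-1 : ℝ) 1) : p = Chebyshev.T ℝ n ∨ p = -Chebyshev.T ℝ n := by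
  have hp' : derivative p ≠ 0 := h.derivative_ne_zero hk (by lia)
  obtain ⟨E, hE⟩ := exists_finset_contacts hp'
  have lower : n ≤ E.card := h.le_card_contacts hk (by lia) fun t ↦ (hE t).2
  have ne : E.card ≠ n := by
    obtain ⟨j, rfl⟩ := Nat.exists_eq_add_of_le' hk
    exact (h.isInteriorSchurMax hk hkn hx₀).card_contacts_ne (by lia) hE
  exact eq_chebyshev_of_contacts (by lia) h.mem hp' (fun t ↦ (hE t).1) (by lia)

lemma le_abs_derivAt_T (h : IsSchurMax n k p x₀) (hk : 1 ≤ k) (hkn : k + 2 ≤ n)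
    (hx₀ : x₀ ∈ Ioo (-1 : ℝ) 1) {ω : ℝ}
    (hω : IsGreatest {x | derivAt (k + 1) x (Chebyshev.T ℝ n) = 0} ω) :
    derivAt k x₀ p ≤ |derivAt k ω (Chebyshev.T ℝ n)| := by
  have monotone (hT : derivAt (k + 1) x₀ (Chebyshev.T ℝ n) = 0) :
      |derivAt k x₀ (Chebyshev.T ℝ n)| ≤ |derivAt k ω (Chebyshev.T ℝ n)| :=
    abs_derivAt_T_le_of_stationary (by lia) (abs_le_of_isGreatest_zeros hω hT) hT hω.1
  have stationary := h.stationary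
  rcases h.eq_chebyshev hk hkn hx₀ with rfl | rfl
  · exact (le_abs_self _).trans (monotone stationary)
  · rw [map_neg, neg_eq_zero] at stationary
    rw [map_neg]
    exact (neg_le_abs _).trans (monotone stationary)

end IsSchurMax

end SchurConstant

/-- Schur-type theorem for higher derivatives:
`max_{x₀∈[-1,1]} μ_k^*(x₀) = max{ |T_n^{(k)}(ω_k)|, μ_k^*(1) }`. -/
theorem schur_type_max (n k : ℕ) (hn : 2 ≤ n) (hk1 : 1 ≤ k) (hk2 : k ≤ n - 1)
    (ωk : ℝ) (hω : IsGreatest {x : ℝ | chebDeriv n (k+1) x = 0} ωk) :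
    sSup {y | ∃ x ∈ Icc (-1:ℝ) 1, y = mukStar n k x} =
      max (|chebDeriv n k ωk|) (mukStar n k 1) := by
  simp only [chebDeriv, ← derivAt_apply] at hω ⊢
  have hkn : k + 2 ≤ n := lt_of_derivAt_T_eq_zero (by lia) (by lia) hω.1
  have ω_lt : |ωk| < 1 := abs_lt_one_of_derivAt_T_eq_zero (by lia) (by lia) hω.1
  obtain ⟨p, x₀, h⟩ := exists_isSchurMax n k
  rw [h.sSup_mukStar]
  apply le_antisymm
  · rcases (abs_le.2 h.point_mem).eq_or_lt with endpoint | interior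
    · exact le_max_of_le_right (h.le_mukStar_one endpoint)
    · exact le_max_of_le_left (h.le_abs_derivAt_T hk1 hkn (abs_lt.1 interior) hω)
  · exact max_le (h.abs_derivAt_le (T_mem_unitPolys n) (abs_le.1 ω_lt.le) hω.1)
      (h.mukStar_le (by norm_num))
end
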